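/- For every Λ ≥ 2/√π there exist constants c(Λ) > 0 and C(Λ) > 0 with the following property. Let ρ ∈ L^∞(ℝ²) be nonnegative, compactly supported, with ‖ρ‖_{L¹} = ‖ρ‖_{L^∞} = 1; set D := diam(supp ρ*) and δ := E(ρ*) − E(ρ). If D ≤ Λ and δ ≤ c(Λ), then there exist a point x₀ ∈ ℝ² and a nonnegative function ρ̃ ∈ L^∞(ℝ²) such that ρ̃ is equimeasurable with ρ (i.e. |{ρ̃ > a}| = |{ρ > a}| for every a > 0), ρ̃ = ρ on B_{3D}(x₀), supp ρ̃ ⊆ B_{4D}(x₀), and E(ρ̃) ≥ E(ρ) − C(Λ) δ. -/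

import Mathlib

open MeasureTheory Metric Filter
open scoped Real ENNReal RealInnerProductSpace

noncomputable section

abbrev E2 : Type := EuclideanSpace ℝ (Fin 2)

/-- The logarithmic interaction energy. -/
def energy (f : E2 → ℝ) : ℝ :=
  -(2 * Real.pi)⁻¹ * ∫ p : E2 × E2, Real.log (dist p.1 p.2) * (f p.1 * f p.2)

/-- `g` is the symmetric decreasing rearrangement of `f`. -/
def IsSymmDecRearr (f g : E2 → ℝ) : Prop :=
  (∀ x, 0 ≤ g x) ∧
  ∀ a : ℝ, 0 < a →
    (∃ r : ℝ, Metric.ball (0 : E2) r ⊆ {x | a ≤ g x} ∧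
        {x | a ≤ g x} ⊆ Metric.closedBall (0 : E2) r) ∧
    volume {x | a ≤ g x} = volume {x | a ≤ |f x|}

/-- The measure with density `f` with respect to Lebesgue measure. -/
def densMeasure (f : E2 → ℝ) : Measure E2 :=
  volume.withDensity fun x => ENNReal.ofReal (f x)

/-- Squared 2-Wasserstein distance between two measures. -/
def W2sq (μ ν : Measure E2) : ℝ≥0∞ :=
  ⨅ γ ∈ {γ : Measure (E2 × E2) | γ.map Prod.fst = μ ∧ γ.map Prod.snd = ν},
    ∫⁻ p, ENNReal.ofReal (dist p.1 p.2 ^ 2) ∂γ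

/-- Center of mass of a density. -/
def centerOfMass (f : E2 → ℝ) : E2 :=
  (∫ x, f x)⁻¹ • ∫ x, f x • x

section Polarization

variable {V : Type*} [NormedAddCommGroup V] [InnerProductSpace ℝ V]

/-- Reflection across the affine hyperplane `{x | ⟪e, x⟫ = s}` with unit normal `e`. -/
def hyperplaneReflection (e : V) (s : ℝ) (x : V) : V := x - (2 * (⟪e, x⟫ - s)) • e

/-- Two-point symmetrization of `f` with respect to the half-space `{x | ⟪e, x⟫ ≤ s}`. -/
def polarize (e : V) (s : ℝ) (f : V → ℝ) (x : V) : ℝ :=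
  if ⟪e, x⟫ ≤ s then max (f x) (f (hyperplaneReflection e s x))
  else min (f x) (f (hyperplaneReflection e s x))

variable {e : V} {s : ℝ}

lemma inner_hyperplaneReflection (he : ‖e‖ = 1) (x : V) :
    ⟪e, hyperplaneReflection e s x⟫ - s = -(⟪e, x⟫ - s) := by
  simp only [hyperplaneReflection, inner_sub_right, inner_smul_right, real_inner_self_eq_norm_sq,
    he]
  ring

lemma hyperplaneReflection_hyperplaneReflection (he : ‖e‖ = 1) (x : V) :
    hyperplaneReflection e s (hyperplaneReflection e s x) = x := by
  have h := inner_hyperplaneReflection (s := s) he x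
  rw [hyperplaneReflection, h, hyperplaneReflection]
  module

lemma dist_hyperplaneReflection_sq (he : ‖e‖ = 1) (x y : V) :
    dist x (hyperplaneReflection e s y) ^ 2
      = dist x y ^ 2 + 4 * (⟪e, x⟫ - s) * (⟪e, y⟫ - s) := by
  have h : x - hyperplaneReflection e s y = (x - y) + (2 * (⟪e, y⟫ - s)) • e := by
    rw [hyperplaneReflection]; module
  rw [dist_eq_norm, dist_eq_norm, h, norm_add_sq_real, inner_smul_right, norm_smul, he,
    inner_sub_left, real_inner_comm x e, real_inner_comm y e, mul_one, Real.norm_eq_abs, sq_abs]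
  ring

lemma dist_hyperplaneReflection_hyperplaneReflection (he : ‖e‖ = 1) (x y : V) :
    dist (hyperplaneReflection e s x) (hyperplaneReflection e s y) = dist x y := by
  have h : dist (hyperplaneReflection e s x) (hyperplaneReflection e s y) ^ 2 = dist x y ^ 2 := by
    rw [dist_hyperplaneReflection_sq he, inner_hyperplaneReflection he, dist_comm,
      dist_hyperplaneReflection_sq he, dist_comm]
    ring
  exact (sq_eq_sq₀ dist_nonneg dist_nonneg).1 h

lemma dist_hyperplaneReflection_comm (he : ‖e‖ = 1) (x y : V) :
    dist (hyperplaneReflection e s x) y = dist x (hyperplaneReflection e s y) := by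
  rw [← dist_hyperplaneReflection_hyperplaneReflection (s := s) he,
    hyperplaneReflection_hyperplaneReflection he]

lemma norm_hyperplaneReflection_sq (he : ‖e‖ = 1) (x : V) :
    ‖hyperplaneReflection e s x‖ ^ 2 = ‖x‖ ^ 2 - 4 * s * (⟪e, x⟫ - s) := by
  have := dist_hyperplaneReflection_sq (s := s) he 0 x
  simp only [dist_zero_left, inner_zero_right] at this
  linarith

lemma continuous_hyperplaneReflection : Continuous (hyperplaneReflection e s) := by
  unfold hyperplaneReflection; fun_prop

lemma hyperplaneReflection_of_inner_eq {x : V} (hx : ⟪e, x⟫ = s) :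
    hyperplaneReflection e s x = x := by
  simp [hyperplaneReflection, hx]

lemma polarize_pair (he : ‖e‖ = 1) (f : V → ℝ) (x : V) :
    (polarize e s f x = f x ∧
      polarize e s f (hyperplaneReflection e s x) = f (hyperplaneReflection e s x)) ∨
    (polarize e s f x = f (hyperplaneReflection e s x) ∧
      polarize e s f (hyperplaneReflection e s x) = f x) := by
  have h := inner_hyperplaneReflection (s := s) he x
  simp only [polarize, hyperplaneReflection_hyperplaneReflection he]
  rcases lt_trichotomy ⟪e, x⟫ s with hx | hx | hx
  · rw [if_pos hx.le, if_neg (by linarith)]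
    rcases le_total (f x) (f (hyperplaneReflection e s x)) with h' | h' <;> simp [h']
  · simp [hx, hyperplaneReflection_of_inner_eq hx]
  · rw [if_neg (by linarith), if_pos (by linarith)]
    rcases le_total (f x) (f (hyperplaneReflection e s x)) with h' | h' <;> simp [h']

lemma polarize_refl_le (he : ‖e‖ = 1) (f : V → ℝ) {x : V} (hx : ⟪e, x⟫ ≤ s) :
    polarize e s f (hyperplaneReflection e s x) ≤ polarize e s f x := by
  have h := inner_hyperplaneReflection (s := s) he x
  rcases hx.lt_or_eq with hx | hx
  · simp only [polarize, hyperplaneReflection_hyperplaneReflection he]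
    rw [if_pos hx.le, if_neg (by linarith)]
    exact (min_le_left _ _).trans (le_max_right _ _)
  · rw [hyperplaneReflection_of_inner_eq hx]

lemma polarize_nonneg {f : V → ℝ} (hf : ∀ x, 0 ≤ f x) (x : V) : 0 ≤ polarize e s f x := by
  unfold polarize
  split_ifs
  · exact (hf x).trans (le_max_left _ _)
  · exact le_min (hf _) (hf _)

lemma polarize_le {f : V → ℝ} {M : ℝ} (hf : ∀ x, f x ≤ M) (x : V) : polarize e s f x ≤ M := by
  unfold polarize
  split_ifs
  · exact max_le (hf _) (hf _)
  · exact (min_le_left _ _).trans (hf _)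

lemma polarize_eq_zero (he : ‖e‖ = 1) (hs : 0 ≤ s) {f : V → ℝ} (hf0 : ∀ x, 0 ≤ f x) {R : ℝ}
    (hf : ∀ x, R < ‖x‖ → f x = 0) {x : V} (hx : R < ‖x‖) : polarize e s f x = 0 := by
  unfold polarize
  rw [hf x hx]
  split_ifs with h
  · have h2 := norm_hyperplaneReflection_sq (s := s) he x
    have h3 : ‖x‖ ≤ ‖hyperplaneReflection e s x‖ := by
      refine (sq_le_sq₀ (norm_nonneg _) (norm_nonneg _)).1 ?_
      nlinarith
    rw [hf _ (hx.trans_le h3), max_self]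
  · exact min_eq_left (hf0 _)

/-- Polarization does not increase the modulus of continuity. -/
lemma polarize_modulus (he : ‖e‖ = 1) {f : V → ℝ} {r M : ℝ}
    (hf : ∀ x y, dist x y ≤ r → f x - f y ≤ M) {x y : V} (hxy : dist x y ≤ r) :
    polarize e s f x - polarize e s f y ≤ M := by
  have h1 := hf x y hxy
  have h2 := hf (hyperplaneReflection e s x) (hyperplaneReflection e s y)
    (by rwa [dist_hyperplaneReflection_hyperplaneReflection he])
  have key : 4 * (⟪e, x⟫ - s) * (⟪e, y⟫ - s) ≤ 0 → 
      f x - f (hyperplaneReflection e s y) ≤ M ∧ f (hyperplaneReflection e s x) - f y ≤ M := by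
    intro h
    have hd : dist x (hyperplaneReflection e s y) ≤ dist x y := by
      refine (sq_le_sq₀ dist_nonneg dist_nonneg).1 ?_
      rw [dist_hyperplaneReflection_sq he]; linarith
    exact ⟨hf _ _ (hd.trans hxy), hf _ _ (by
      rw [dist_hyperplaneReflection_comm he]; exact hd.trans hxy)⟩
  unfold polarize
  split_ifs with hx hy hy
  · rcases max_cases (f x) (f (hyperplaneReflection e s x)) with h | h <;>
    rcases max_cases (f y) (f (hyperplaneReflection e s y)) with h' | h' <;> linarith
  · have := key (by nlinarith)
    rcases max_cases (f x) (f (hyperplaneReflection e s x)) with h | h <;>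
    rcases min_cases (f y) (f (hyperplaneReflection e s y)) with h' | h' <;> linarith
  · rcases min_cases (f x) (f (hyperplaneReflection e s x)) with h | h <;>
    rcases max_cases (f y) (f (hyperplaneReflection e s y)) with h' | h' <;> linarith
  · rcases min_cases (f x) (f (hyperplaneReflection e s x)) with h | h <;>
    rcases min_cases (f y) (f (hyperplaneReflection e s y)) with h' | h' <;> linarith

/-- The four-point inequality behind the monotonicity of interactions under polarization. -/
lemma four_point_le (he : ‖e‖ = 1) {φ : ℝ → ℝ} (hφ : Antitone φ) (f : V → ℝ) (x y : V) :
    φ (dist x y) * (f x * f y + f (hyperplaneReflection e s x) * f (hyperplaneReflection e s y))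
      + φ (dist x (hyperplaneReflection e s y)) *
        (f x * f (hyperplaneReflection e s y) + f (hyperplaneReflection e s x) * f y)
    ≤ φ (dist x y) * (polarize e s f x * polarize e s f y
        + polarize e s f (hyperplaneReflection e s x) * polarize e s f (hyperplaneReflection e s y))
      + φ (dist x (hyperplaneReflection e s y)) *
        (polarize e s f x * polarize e s f (hyperplaneReflection e s y)
          + polarize e s f (hyperplaneReflection e s x) * polarize e s f y) := by
  have hd := dist_hyperplaneReflection_sq (s := s) he x y
  have e1 := inner_hyperplaneReflection (s := s) he x
  have e2 := inner_hyperplaneReflection (s := s) he y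
  have hx := polarize_pair (s := s) he f x
  have hy := polarize_pair (s := s) he f y
  have ox : ⟪e, x⟫ ≤ s → _ := polarize_refl_le he f (x := x)
  have oy : ⟪e, y⟫ ≤ s → _ := polarize_refl_le he f (x := y)
  have ox' : ⟪e, hyperplaneReflection e s x⟫ ≤ s → _ := polarize_refl_le he f
  have oy' : ⟪e, hyperplaneReflection e s y⟫ ≤ s → _ := polarize_refl_le he f
  rw [hyperplaneReflection_hyperplaneReflection he] at ox' oy'
  have hpos : 0 ≤ (⟪e, x⟫ - s) * (⟪e, y⟫ - s) →
      φ (dist x (hyperplaneReflection e s y)) ≤ φ (dist x y) := fun h => hφ <| by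
    refine (sq_le_sq₀ dist_nonneg dist_nonneg).1 ?_
    rw [hd]; linarith
  have hneg : (⟪e, x⟫ - s) * (⟪e, y⟫ - s) ≤ 0 →
      φ (dist x y) ≤ φ (dist x (hyperplaneReflection e s y)) := fun h => hφ <| by
    refine (sq_le_sq₀ dist_nonneg dist_nonneg).1 ?_
    rw [hd]; linarith
  generalize hyperplaneReflection e s x = x' at *
  generalize hyperplaneReflection e s y = y' at *
  generalize polarize e s f = g at *
  generalize φ (dist x y) = a at *
  generalize φ (dist x y') = b at *
  have sgn : (0 ≤ (g x - g x') * (g y - g y') ∧ b ≤ a) ∨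
      ((g x - g x') * (g y - g y') ≤ 0 ∧ a ≤ b) := by
    rcases le_total ⟪e, x⟫ s with h1 | h1 <;> rcases le_total ⟪e, y⟫ s with h2 | h2
    · exact .inl ⟨mul_nonneg (sub_nonneg.2 (ox h1)) (sub_nonneg.2 (oy h2)),
        hpos (mul_nonneg_of_nonpos_of_nonpos (by linarith) (by linarith))⟩
    · exact .inr ⟨mul_nonpos_of_nonneg_of_nonpos (sub_nonneg.2 (ox h1))
        (sub_nonpos.2 (oy' (by linarith))),
        hneg (mul_nonpos_of_nonpos_of_nonneg (by linarith) (by linarith))⟩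
    · exact .inr ⟨mul_nonpos_of_nonpos_of_nonneg (sub_nonpos.2 (ox' (by linarith)))
        (sub_nonneg.2 (oy h2)),
        hneg (mul_nonpos_of_nonneg_of_nonpos (by linarith) (by linarith))⟩
    · exact .inl ⟨mul_nonneg_of_nonpos_of_nonpos (sub_nonpos.2 (ox' (by linarith)))
        (sub_nonpos.2 (oy' (by linarith))),
        hpos (mul_nonneg (by linarith) (by linarith))⟩
  rcases hx with ⟨hx, hx'⟩ | ⟨hx, hx'⟩ <;> rcases hy with ⟨hy, hy'⟩ | ⟨hy, hy'⟩ <;>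
    rw [← hx, ← hx', ← hy, ← hy'] <;> rcases sgn with ⟨h1, h2⟩ | ⟨h1, h2⟩ <;>
    first
    | linarith
    | nlinarith [mul_nonneg (neg_nonneg.2 h1) (sub_nonneg.2 h2)]
    | nlinarith [mul_nonneg h1 (sub_nonneg.2 h2)]

lemma polarize_moment_integrand_nonneg (hs : 0 ≤ s) (f : V → ℝ) (x : V) :
    0 ≤ (f x - polarize e s f x) * (4 * s * (⟪e, x⟫ - s)) := by
  unfold polarize
  split_ifs with h
  · exact mul_nonneg_of_nonpos_of_nonpos (sub_nonpos.2 (le_max_left _ _))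
      (mul_nonpos_of_nonneg_of_nonpos (by linarith) (by linarith))
  · exact mul_nonneg (sub_nonneg.2 (min_le_left _ _)) (mul_nonneg (by linarith) (by linarith))

/-- The reflection exchanging `x` and `y`, `‖x‖ < ‖y‖`, has `0` and `x` on the same side. -/
lemma exists_reflection_of_norm_lt {x y : V} (h : ‖x‖ < ‖y‖) :
    ∃ (e : V) (s : ℝ), ‖e‖ = 1 ∧ 0 < s ∧ ⟪e, x⟫ < s ∧ hyperplaneReflection e s x = y := by
  have hne : y - x ≠ 0 := fun h0 => by rw [sub_eq_zero.1 h0] at h; exact lt_irrefl _ h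
  have hn : 0 < ‖y - x‖ := norm_pos_iff.2 hne
  have hyx : ‖y - x‖ ^ 2 = ‖y‖ ^ 2 - 2 * ⟪y, x⟫ + ‖x‖ ^ 2 := norm_sub_sq_real y x
  have hin : ⟪y - x, x⟫ = ⟪y, x⟫ - ‖x‖ ^ 2 := by
    rw [inner_sub_left, real_inner_self_eq_norm_sq]
  have hlt : ‖x‖ ^ 2 < ‖y‖ ^ 2 := by gcongr
  refine ⟨‖y - x‖⁻¹ • (y - x), ‖y - x‖⁻¹ * ((‖y‖ ^ 2 - ‖x‖ ^ 2) / 2), ?_, ?_, ?_, ?_⟩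
  · rw [norm_smul, norm_inv, norm_norm, inv_mul_cancel₀ hn.ne']
  · have : 0 < ‖y‖ ^ 2 - ‖x‖ ^ 2 := by linarith
    positivity
  · rw [real_inner_smul_left]
    refine mul_lt_mul_of_pos_left ?_ (inv_pos.2 hn)
    have : 0 < ‖y - x‖ ^ 2 := by positivity
    linarith
  · have : 2 * (⟪‖y - x‖⁻¹ • (y - x), x⟫ - ‖y - x‖⁻¹ * ((‖y‖ ^ 2 - ‖x‖ ^ 2) / 2))
        = - ‖y - x‖ := by
      rw [real_inner_smul_left, hin]
      field_simp
      linarith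
    rw [hyperplaneReflection, this, smul_smul, neg_mul, mul_inv_cancel₀ hn.ne']
    module

end Polarization

section PolarizationIntegral

variable {V : Type*} [NormedAddCommGroup V] [InnerProductSpace ℝ V]
  [MeasurableSpace V] [BorelSpace V] {e : V} {s : ℝ}

lemma measurableEmbedding_hyperplaneReflection (he : ‖e‖ = 1) :
    MeasurableEmbedding (hyperplaneReflection e s) :=
  (Homeomorph.mk ⟨hyperplaneReflection e s, hyperplaneReflection e s,
    hyperplaneReflection_hyperplaneReflection he, hyperplaneReflection_hyperplaneReflection he⟩
    continuous_hyperplaneReflection continuous_hyperplaneReflection).measurableEmbedding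

variable [FiniteDimensional ℝ V]

/-- The interaction of `f` with itself through the radial kernel `φ`. -/
def interaction (φ : ℝ → ℝ) (f : V → ℝ) : ℝ :=
  ∫ p : V × V, φ (dist p.1 p.2) * (f p.1 * f p.2)

lemma measurePreserving_hyperplaneReflection (he : ‖e‖ = 1) :
    MeasurePreserving (hyperplaneReflection e s) (volume : Measure V) volume := by
  have h := (measurePreserving_add_right (volume : Measure V) ((2 * s) • e)).comp
    (Submodule.reflection (ℝ ∙ e)ᗮ).measurePreserving
  have heq : hyperplaneReflection e s =
      (fun x => x + (2 * s) • e) ∘ (Submodule.reflection (ℝ ∙ e)ᗮ) := by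
    funext x
    simp only [Function.comp, hyperplaneReflection, Submodule.reflection_orthogonal_apply,
      Submodule.reflection_singleton_apply, he]
    simp only [RCLike.ofReal_real_eq_id, id, one_pow, div_one]
    module
  rw [heq]
  exact h

lemma integral_hyperplaneReflection (he : ‖e‖ = 1) (F : V → ℝ) :
    ∫ x, F (hyperplaneReflection e s x) = ∫ x, F x :=
  (measurePreserving_hyperplaneReflection he).integral_comp
    (measurableEmbedding_hyperplaneReflection he) F

lemma two_mul_integral_eq (he : ‖e‖ = 1) {F : V → ℝ} (hF : Integrable F) :
    2 * ∫ x, F x = ∫ x, (F x + F (hyperplaneReflection e s x)) := by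
  have h : Integrable fun x => F (hyperplaneReflection e s x) :=
    (measurePreserving_hyperplaneReflection he).integrable_comp_of_integrable hF
  rw [integral_add hF h, integral_hyperplaneReflection he]
  ring

lemma integrable_interaction {φ : ℝ → ℝ} (hφ : Antitone φ) {N : ℝ} (hN : ∀ r, |φ r| ≤ N)
    {f g : V → ℝ} (hf : Integrable f) (hg : Integrable g) :
    Integrable fun p : V × V => φ (dist p.1 p.2) * (f p.1 * g p.2) := by
  refine (hf.mul_prod hg).bdd_mul (c := N) ?_ (ae_of_all _ fun p => ?_)
  · exact (hφ.measurable.comp (by fun_prop : Measurable fun p : V × V => dist p.1 p.2)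
      ).aestronglyMeasurable
  · simpa using hN _

lemma four_mul_interaction_eq (he : ‖e‖ = 1) {φ : ℝ → ℝ} (hφ : Antitone φ) {N : ℝ}
    (hN : ∀ r, |φ r| ≤ N) {f : V → ℝ} (hf : Integrable f) :
    Integrable (fun p : V × V => φ (dist p.1 p.2) * (f p.1 * f p.2 +
      f (hyperplaneReflection e s p.1) * f (hyperplaneReflection e s p.2)) +
      φ (dist p.1 (hyperplaneReflection e s p.2)) * (f p.1 * f (hyperplaneReflection e s p.2) +
      f (hyperplaneReflection e s p.1) * f p.2)) ∧
    4 * interaction φ f = ∫ p : V × V, (φ (dist p.1 p.2) * (f p.1 * f p.2 +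
      f (hyperplaneReflection e s p.1) * f (hyperplaneReflection e s p.2)) +
      φ (dist p.1 (hyperplaneReflection e s p.2)) * (f p.1 * f (hyperplaneReflection e s p.2) +
      f (hyperplaneReflection e s p.1) * f p.2)) := by
  set σ := hyperplaneReflection e s with hσ
  have hm : MeasurePreserving σ (volume : Measure V) volume :=
    measurePreserving_hyperplaneReflection he
  have hid := MeasurePreserving.id (volume : Measure V)
  have emb : MeasurableEmbedding σ := measurableEmbedding_hyperplaneReflection he
  have I := integrable_interaction hφ hN hf hf
  have m1 := hm.prod hid
  have m2 := hid.prod hm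
  have m3 := hm.prod hm
  have I1 := m1.integrable_comp_of_integrable I
  have I2 := m2.integrable_comp_of_integrable I
  have I3 := m3.integrable_comp_of_integrable I
  have E1 := m1.integral_comp (emb.prodMap .id) fun p : V × V => φ (dist p.1 p.2) * (f p.1 * f p.2)
  have E2 := m2.integral_comp (MeasurableEmbedding.id.prodMap emb)
    fun p : V × V => φ (dist p.1 p.2) * (f p.1 * f p.2)
  have E3 := m3.integral_comp (emb.prodMap emb)
    fun p : V × V => φ (dist p.1 p.2) * (f p.1 * f p.2)
  have hsum : (fun p : V × V => φ (dist p.1 p.2) * (f p.1 * f p.2 + f (σ p.1) * f (σ p.2)) +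
      φ (dist p.1 (σ p.2)) * (f p.1 * f (σ p.2) + f (σ p.1) * f p.2)) =
      fun p => (φ (dist p.1 p.2) * (f p.1 * f p.2) +
        φ (dist (σ p.1) (σ p.2)) * (f (σ p.1) * f (σ p.2))) +
        (φ (dist p.1 (σ p.2)) * (f p.1 * f (σ p.2)) +
          φ (dist (σ p.1) p.2) * (f (σ p.1) * f p.2)) := by
    funext p
    rw [hσ, dist_hyperplaneReflection_hyperplaneReflection he,
      dist_hyperplaneReflection_comm he]
    ring
  rw [hsum]
  refine ⟨(I.add I3).add (I2.add I1), ?_⟩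
  simp only [Prod.map_fst, Prod.map_snd, id] at E1 E2 E3
  rw [integral_add, integral_add, integral_add]
  · rw [interaction, Measure.volume_eq_prod, E1, E2, E3]; ring
  exacts [I2, I1, I, I3, I.add I3, I2.add I1]

/-- Polarization increases the interaction through an antitone kernel. -/
lemma interaction_le_polarize (he : ‖e‖ = 1) {φ : ℝ → ℝ} (hφ : Antitone φ) {N : ℝ}
    (hN : ∀ r, |φ r| ≤ N) {f : V → ℝ} (hf : Integrable f) (hp : Integrable (polarize e s f)) :
    interaction φ f ≤ interaction φ (polarize e s f) := by
  have h1 := four_mul_interaction_eq (s := s) he hφ hN hf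
  have h2 := four_mul_interaction_eq (s := s) he hφ hN hp
  have := integral_mono h1.1 h2.1 fun p => four_point_le he hφ f p.1 p.2
  rw [← h1.2, ← h2.2] at this
  linarith

/-- Polarization preserves the distribution function. -/
lemma integral_comp_polarize (he : ‖e‖ = 1) {f : V → ℝ} (ψ : ℝ → ℝ)
    (h1 : Integrable fun x => ψ (f x)) (h2 : Integrable fun x => ψ (polarize e s f x)) :
    ∫ x, ψ (polarize e s f x) = ∫ x, ψ (f x) := by
  have e1 := two_mul_integral_eq (s := s) he h1
  have e2 := two_mul_integral_eq (s := s) he h2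
  suffices h : (fun x => ψ (polarize e s f x) + ψ (polarize e s f (hyperplaneReflection e s x))) =
      fun x => ψ (f x) + ψ (f (hyperplaneReflection e s x)) by
    rw [h] at e2; linarith
  funext x
  rcases polarize_pair (s := s) he f x with ⟨h, h'⟩ | ⟨h, h'⟩ <;> rw [h, h']
  ring

/-- Change of the second moment under polarization. -/
lemma two_mul_second_moment_sub (he : ‖e‖ = 1) {f : V → ℝ}
    (h1 : Integrable fun x => f x * ‖x‖ ^ 2)
    (h2 : Integrable fun x => polarize e s f x * ‖x‖ ^ 2) :
    2 * ((∫ x, f x * ‖x‖ ^ 2) - ∫ x, polarize e s f x * ‖x‖ ^ 2) =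
      ∫ x, (f x - polarize e s f x) * (4 * s * (⟪e, x⟫ - s)) := by
  rw [← integral_sub h1 h2]
  refine (two_mul_integral_eq he (s := s) (h1.sub h2)).trans ?_
  congr 1
  funext x
  simp only [Pi.sub_apply, norm_hyperplaneReflection_sq he]
  rcases polarize_pair (s := s) he f x with ⟨h, h'⟩ | ⟨h, h'⟩ <;> rw [h, h'] <;> ring

end PolarizationIntegral

section RadialRearrangement

variable {V : Type*} [NormedAddCommGroup V]

/-- Functions with values in `[0, M]`, vanishing outside the ball of radius `R`, whose modulus of
continuity is at most that of `f`. -/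
def modulusClass (f : V → ℝ) (M R : ℝ) : Set (V → ℝ) :=
  {h | (∀ x, 0 ≤ h x) ∧ (∀ x, h x ≤ M) ∧ (∀ x, R < ‖x‖ → h x = 0) ∧
    ∀ r A, (∀ x y, dist x y ≤ r → f x - f y ≤ A) → ∀ x y, dist x y ≤ r → h x - h y ≤ A}

lemma isClosed_modulusClass (f : V → ℝ) (M R : ℝ) : IsClosed (modulusClass f M R) := by
  simp only [modulusClass, Set.ofPred_and, Set.ofPred_forall]
  refine .inter ?_ (.inter ?_ (.inter ?_ ?_))
  · exact isClosed_iInter fun x => isClosed_le continuous_const (continuous_apply x)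
  · exact isClosed_iInter fun x => isClosed_le (continuous_apply x) continuous_const
  · exact isClosed_iInter fun x => isClosed_iInter fun _ =>
      isClosed_eq (continuous_apply x) continuous_const
  · exact isClosed_iInter fun r => isClosed_iInter fun A => isClosed_iInter fun _ =>
      isClosed_iInter fun x => isClosed_iInter fun y => isClosed_iInter fun _ =>
      isClosed_le ((continuous_apply x).sub (continuous_apply y)) continuous_const

lemma isCompact_modulusClass (f : V → ℝ) (M R : ℝ) : IsCompact (modulusClass f M R) := by
  refine (isCompact_univ_pi fun _ : V => isCompact_Icc (a := (0 : ℝ)) (b := M)).of_isClosed_subset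
    (isClosed_modulusClass f M R) fun h hh x _ => ⟨hh.1 x, hh.2.1 x⟩

lemma modulusClass_dist_lt {f : V → ℝ} (hf : UniformContinuous f) (M R : ℝ) {ε : ℝ} (hε : 0 < ε) :
    ∃ δ > 0, ∀ h ∈ modulusClass f M R, ∀ x y, dist x y ≤ δ → dist (h x) (h y) < ε := by
  obtain ⟨δ, hδ, H⟩ := Metric.uniformContinuous_iff.1 hf (ε / 2) (half_pos hε)
  refine ⟨δ / 2, half_pos hδ, fun h hh x y hxy => ?_⟩
  have key := hh.2.2.2 (δ / 2) (ε / 2) fun u v huv =>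
    (le_abs_self _).trans (H (huv.trans_lt (half_lt_self hδ))).le
  have h1 := key x y hxy
  have h2 := key y x (by rwa [dist_comm])
  rw [Real.dist_eq, abs_lt]
  constructor <;> linarith

lemma continuous_of_mem_modulusClass {f : V → ℝ} (hf : UniformContinuous f) {M R : ℝ} {h : V → ℝ}
    (hh : h ∈ modulusClass f M R) : Continuous h := by
  refine Metric.continuous_iff.2 fun x ε hε => ?_
  obtain ⟨δ, hδ, H⟩ := modulusClass_dist_lt hf M R hε
  exact ⟨δ, hδ, fun y hy => H h hh y x hy.le⟩

lemma isCompact_continuousMap_modulusClass {f : V → ℝ} (hf : UniformContinuous f) (M R : ℝ) :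
    IsCompact {h : C(V, ℝ) | ⇑h ∈ modulusClass f M R} := by
  refine ArzelaAscoli.isCompact_of_equicontinuous _ ?_ ?_
  · convert isCompact_modulusClass f M R
    ext h
    constructor
    · rintro ⟨g, hg, rfl⟩
      exact hg
    · exact fun hh => ⟨⟨h, continuous_of_mem_modulusClass hf hh⟩, hh, rfl⟩
  · intro x
    rw [Metric.equicontinuousAt_iff]
    intro ε hε
    obtain ⟨δ, hδ, H⟩ := modulusClass_dist_lt hf M R hε
    exact ⟨δ, hδ, fun y hy h => H h.1 h.2 x y (by rw [dist_comm]; exact hy.le)⟩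

lemma abs_le_indicator_of_eq_zero {g : V → ℝ} {R A : ℝ} (h1 : ∀ x, R < ‖x‖ → g x = 0)
    (h2 : ∀ x, |g x| ≤ A) (x : V) : |g x| ≤ (closedBall (0 : V) R).indicator (fun _ => A) x := by
  by_cases hx : x ∈ closedBall (0 : V) R
  · rw [Set.indicator_of_mem hx]; exact h2 x
  · rw [Set.indicator_of_notMem hx, h1 x (by simpa using hx), abs_zero]

variable [InnerProductSpace ℝ V]

lemma polarize_mem_modulusClass {e : V} {s : ℝ} (he : ‖e‖ = 1) (hs : 0 ≤ s) {f : V → ℝ} {M R : ℝ}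
    {h : V → ℝ} (hh : h ∈ modulusClass f M R) : polarize e s h ∈ modulusClass f M R :=
  ⟨polarize_nonneg hh.1, polarize_le hh.2.1, fun _ hx => polarize_eq_zero he hs hh.1 hh.2.2.1 hx,
    fun r A hf _ _ hxy => polarize_modulus he (hh.2.2.2 r A hf) hxy⟩

variable [FiniteDimensional ℝ V]

lemma hasCompactSupport_of_eq_zero {h : V → ℝ} {R : ℝ} (hR : ∀ x, R < ‖x‖ → h x = 0) :
    HasCompactSupport h :=
  HasCompactSupport.intro (isCompact_closedBall (0 : V) R) fun x hx => hR x (by simpa using hx)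

/-- Integral functionals depending continuously on the values of `h` are continuous on
`modulusClass`. -/
lemma continuousOn_integral_modulusClass {α : Type*} [MeasurableSpace α] {μ : Measure α}
    {f : V → ℝ} {M R : ℝ} {F : C(V, ℝ) → α → ℝ} {b : α → ℝ} (hb : Integrable b μ)
    (hF : ∀ a, Continuous fun h => F h a)
    (hm : ∀ h : C(V, ℝ), ⇑h ∈ modulusClass f M R → AEStronglyMeasurable (F h) μ)
    (hbd : ∀ h : C(V, ℝ), ⇑h ∈ modulusClass f M R → ∀ a, |F h a| ≤ b a) :
    ContinuousOn (fun h => ∫ a, F h a ∂μ) {h : C(V, ℝ) | ⇑h ∈ modulusClass f M R} :=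
  continuousOn_of_dominated hm (fun h hh => ae_of_all _ (hbd h hh)) hb
    (ae_of_all _ fun a => (hF a).continuousOn)

variable [MeasurableSpace V] [BorelSpace V]

lemma integrable_indicator_ball_const (R A : ℝ) :
    Integrable ((closedBall (0 : V) R).indicator fun _ => A) :=
  (integrable_indicator_iff measurableSet_closedBall).2
    (integrableOn_const measure_closedBall_lt_top.ne)

/-- A continuous compactly supported function has a radially decreasing equimeasurable
rearrangement that does not decrease the interaction through a given bounded antitone kernel. -/
theorem exists_radial_rearrangement {φ : ℝ → ℝ} (hφ : Antitone φ) {N : ℝ} (hN : ∀ r, |φ r| ≤ N)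
    {f : V → ℝ} (hf : Continuous f) (hfc : HasCompactSupport f) (hf0 : ∀ x, 0 ≤ f x) :
    ∃ h : V → ℝ, Continuous h ∧ HasCompactSupport h ∧ (∀ x, 0 ≤ h x) ∧
      (∀ x y, ‖x‖ < ‖y‖ → h y ≤ h x) ∧
      (∀ ψ : ℝ → ℝ, Continuous ψ → ψ 0 = 0 → ∫ x, ψ (h x) = ∫ x, ψ (f x)) ∧
      interaction φ f ≤ interaction φ h := by
  have hfu := hfc.uniformContinuous_of_continuous hf
  obtain ⟨M, hM⟩ := hfc.exists_bound_of_continuous hf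
  obtain ⟨R, hR⟩ := hfc.isCompact.isBounded.subset_closedBall (0 : V)
  have hfR : ∀ x, R < ‖x‖ → f x = 0 := fun x hx => image_eq_zero_of_notMem_tsupport fun h => by
    have := hR h
    simp only [mem_closedBall, dist_zero_right] at this
    linarith
  have hfS : f ∈ modulusClass f M R :=
    ⟨hf0, fun x => (le_abs_self _).trans (hM x), hfR, fun r A h => h⟩
  have hM0 : 0 ≤ M := (norm_nonneg _).trans (hM 0)
  have hN0 : 0 ≤ N := (abs_nonneg _).trans (hN 0)
  set K : Set C(V, ℝ) := {h | ⇑h ∈ modulusClass f M R} with hK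
  have Kcpt : IsCompact K := isCompact_continuousMap_modulusClass hfu M R
  have supp : ∀ {h : V → ℝ}, h ∈ modulusClass f M R → HasCompactSupport h :=
    fun hh => hasCompactSupport_of_eq_zero hh.2.2.1
  have cont : ∀ {h : V → ℝ}, h ∈ modulusClass f M R → Continuous h :=
    fun hh => continuous_of_mem_modulusClass hfu hh
  have integ : ∀ {h : V → ℝ}, h ∈ modulusClass f M R → Integrable h :=
    fun hh => (cont hh).integrable_of_hasCompactSupport (supp hh)
  have integψ : ∀ {h : V → ℝ}, h ∈ modulusClass f M R → ∀ ψ : ℝ → ℝ, Continuous ψ → ψ 0 = 0 →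
      Integrable fun x => ψ (h x) := fun hh ψ hψ h0 =>
    (hψ.comp (cont hh)).integrable_of_hasCompactSupport ((supp hh).comp_left h0)
  have integm : ∀ {h : V → ℝ}, h ∈ modulusClass f M R → Integrable fun x => h x * ‖x‖ ^ 2 :=
    fun hh => ((cont hh).mul (continuous_norm.pow 2)).integrable_of_hasCompactSupport
      ((supp hh).mul_right)
  have absle : ∀ {h : V → ℝ}, h ∈ modulusClass f M R → ∀ x, |h x| ≤ M := fun hh x => by
    rw [abs_of_nonneg (hh.1 x)]; exact hh.2.1 x
  have cψ : ∀ ψ : ℝ → ℝ, Continuous ψ → ψ 0 = 0 → ContinuousOn (fun h => ∫ x, ψ (h x)) K := by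
    intro ψ hψ h0
    obtain ⟨A, hA⟩ := (isCompact_Icc (a := (0 : ℝ)) (b := M)).exists_bound_of_continuousOn
      hψ.continuousOn
    exact continuousOn_integral_modulusClass (integrable_indicator_ball_const R A)
      (fun a => hψ.comp (continuous_eval_const a))
      (fun h hh => (integψ hh ψ hψ h0).aestronglyMeasurable)
      (fun h hh => abs_le_indicator_of_eq_zero (fun x hx => by rw [hh.2.2.1 x hx, h0])
        fun x => hA _ ⟨hh.1 x, hh.2.1 x⟩)
  have cI : ContinuousOn (fun h : C(V, ℝ) => interaction φ h) K := by
    refine continuousOn_integral_modulusClass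
      (b := fun p : V × V => N * ((closedBall (0 : V) R).indicator (fun _ => M) p.1 *
        (closedBall (0 : V) R).indicator (fun _ => M) p.2)) ?_ (fun p => ?_) ?_ ?_
    · exact ((integrable_indicator_ball_const R M).mul_prod
        (integrable_indicator_ball_const R M)).const_mul N
    · exact continuous_const.mul ((continuous_eval_const p.1).mul (continuous_eval_const p.2))
    · exact fun h hh => (integrable_interaction hφ hN (integ hh) (integ hh)).aestronglyMeasurable
    · intro h hh p
      rw [abs_mul, abs_mul]
      have := abs_le_indicator_of_eq_zero hh.2.2.1 (absle hh)
      exact mul_le_mul (hN _) (mul_le_mul (this _) (this _) (abs_nonneg _)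
        ((abs_nonneg _).trans (this _))) (by positivity) hN0
  have cm : ContinuousOn (fun h : C(V, ℝ) => ∫ x, h x * ‖x‖ ^ 2) K := by
    refine continuousOn_integral_modulusClass (integrable_indicator_ball_const R (M * R ^ 2))
      (fun x => (continuous_eval_const x).mul continuous_const)
      (fun h hh => (integm hh).aestronglyMeasurable)
      (fun h hh x => ?_)
    by_cases hx : x ∈ closedBall (0 : V) R
    · rw [Set.indicator_of_mem hx, abs_mul, abs_of_nonneg (by positivity : 0 ≤ ‖x‖ ^ 2)]
      have hx' : ‖x‖ ≤ R := by simpa using hx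
      have := absle hh x
      gcongr
    · rw [Set.indicator_of_notMem hx, hh.2.2.1 x (by simpa using hx), zero_mul, abs_zero]
  set S : Set C(V, ℝ) := (K ∩ (fun h : C(V, ℝ) => interaction φ h) ⁻¹' Set.Ici (interaction φ f)) ∩
    ⋂ (ψ : ℝ → ℝ) (_ : Continuous ψ) (_ : ψ 0 = 0),
      (K ∩ (fun h : C(V, ℝ) => ∫ x, ψ (h x)) ⁻¹' {∫ x, ψ (f x)}) with hS
  have Scl : IsClosed S :=
    (cI.preimage_isClosed_of_isClosed Kcpt.isClosed isClosed_Ici).inter <|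
      isClosed_iInter fun ψ => isClosed_iInter fun hψ => isClosed_iInter fun h0 =>
        (cψ ψ hψ h0).preimage_isClosed_of_isClosed Kcpt.isClosed isClosed_singleton
  have Scpt : IsCompact S := Kcpt.of_isClosed_subset Scl fun h hh => hh.1.1
  have memS : ∀ h : C(V, ℝ), h ∈ S ↔ ⇑h ∈ modulusClass f M R ∧ interaction φ f ≤ interaction φ h ∧
      ∀ ψ : ℝ → ℝ, Continuous ψ → ψ 0 = 0 → ∫ x, ψ (h x) = ∫ x, ψ (f x) := by
    intro h
    simp only [hS, hK, Set.mem_inter_iff, Set.mem_iInter, Set.mem_preimage, Set.mem_Ici,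
      Set.mem_singleton_iff, Set.mem_ofPred_eq]
    exact ⟨fun H => ⟨H.1.1, H.1.2, fun ψ a b => (H.2 ψ a b).2⟩,
      fun H => ⟨⟨H.1, H.2.1⟩, fun ψ a b => ⟨H.1, H.2.2 ψ a b⟩⟩⟩
  have Sne : S.Nonempty := ⟨⟨f, hf⟩, (memS _).2 ⟨hfS, le_rfl, fun _ _ _ => rfl⟩⟩
  obtain ⟨h, hhS, hmin⟩ := Scpt.exists_isMinOn Sne (cm.mono fun h hh => hh.1.1)
  obtain ⟨hh, hE, hψ⟩ := (memS h).1 hhS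
  refine ⟨h, h.continuous, supp hh, hh.1, fun x y hxy => ?_, hψ, hE⟩
  obtain ⟨e, s, he, hs, hx, rfl⟩ := exists_reflection_of_norm_lt hxy
  have hp := polarize_mem_modulusClass he hs.le hh
  have hpS : (⟨polarize e s h, cont hp⟩ : C(V, ℝ)) ∈ S := (memS _).2 ⟨hp,
    hE.trans (interaction_le_polarize he hφ hN (integ hh) (integ hp)), fun ψ c0 h0 =>
    (integral_comp_polarize he ψ (integψ hh ψ c0 h0) (integψ hp ψ c0 h0)).trans (hψ ψ c0 h0)⟩
  have hle : ∫ x, h x * ‖x‖ ^ 2 ≤ ∫ x, polarize e s h x * ‖x‖ ^ 2 := hmin hpS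
  have hmom := two_mul_second_moment_sub he (integm hh) (integm hp)
  have hnn := polarize_moment_integrand_nonneg (e := e) hs.le h
  have hc : Continuous fun x => (h x - polarize e s h x) * (4 * s * (⟪e, x⟫ - s)) :=
    (h.continuous.sub (cont hp)).mul (by fun_prop)
  have hz : (fun x => (h x - polarize e s h x) * (4 * s * (⟪e, x⟫ - s))) = 0 := by
    have hint : Integrable fun x => (h x - polarize e s h x) * (4 * s * (⟪e, x⟫ - s)) :=
      hc.integrable_of_hasCompactSupport (((supp hh).sub (supp hp)).mul_right)
    have : ∫ x, (h x - polarize e s h x) * (4 * s * (⟪e, x⟫ - s)) = 0 :=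
      le_antisymm (by linarith) (integral_nonneg hnn)
    exact (hc.ae_eq_iff_eq volume continuous_zero).1 ((integral_eq_zero_iff_of_nonneg hnn hint).1 this)
  have hzx := congrFun hz x
  have hne : 4 * s * (⟪e, x⟫ - s) ≠ 0 := mul_ne_zero (by positivity) (by linarith)
  have heq : h x = polarize e s h x := sub_eq_zero.1 ((mul_eq_zero.1 hzx).resolve_right hne)
  rw [heq, polarize, if_pos hx.le]
  exact le_max_right _ _

end RadialRearrangement

section Riesz

variable {V : Type*} [NormedAddCommGroup V]

/-- The superlevel sets of `g` are balls centred at the origin. -/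
def HasBallLevels (g : V → ℝ) : Prop :=
  ∀ a : ℝ, 0 < a → ∃ r : ℝ, ball (0 : V) r ⊆ {x | a ≤ g x} ∧ {x | a ≤ g x} ⊆ closedBall (0 : V) r

lemma hasBallLevels_of_radial {h : V → ℝ} (hc : HasCompactSupport h)
    (hr : ∀ x y, ‖x‖ < ‖y‖ → h y ≤ h x) : HasBallLevels h := by
  intro a ha
  obtain ⟨R, hR⟩ := hc.isCompact.isBounded.subset_closedBall (0 : V)
  have hsub : {x | a ≤ h x} ⊆ closedBall (0 : V) R := fun x hx =>
    hR (subset_tsupport _ (ha.trans_le hx).ne')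
  rcases Set.eq_empty_or_nonempty {x | a ≤ h x} with h0 | hne
  · exact ⟨0, by simp, by simp [h0]⟩
  have bdd : BddAbove (norm '' {x | a ≤ h x}) := ⟨R, by
    rintro _ ⟨x, hx, rfl⟩
    simpa using hsub hx⟩
  refine ⟨sSup (norm '' {x | a ≤ h x}), fun x hx => ?_, fun x hx => ?_⟩
  · obtain ⟨_, ⟨y, hy, rfl⟩, hxy⟩ := exists_lt_of_lt_csSup (hne.image _) (mem_ball_zero_iff.1 hx)
    exact le_trans hy (hr x y hxy)
  · exact mem_closedBall_zero_iff.2 (le_csSup bdd ⟨x, hx, rfl⟩)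

variable [InnerProductSpace ℝ V] [FiniteDimensional ℝ V] [MeasurableSpace V] [BorelSpace V]

lemma ae_eq_ball_of_subset [Nontrivial V] {A : Set V} {r : ℝ} (h1 : ball (0 : V) r ⊆ A)
    (h2 : A ⊆ closedBall (0 : V) r) : A =ᵐ[volume] ball (0 : V) r := by
  refine (ae_eq_of_subset_of_measure_ge h1 ?_ measurableSet_ball.nullMeasurableSet ?_).symm
  · rw [← Measure.addHaar_closedBall_eq_addHaar_ball]
    exact measure_mono h2
  · exact ((measure_mono h2).trans_lt measure_closedBall_lt_top).ne

lemma min_measure_le_measure_inter [Nontrivial V] {A B : Set V} {r t : ℝ}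
    (hA : A =ᵐ[volume] ball (0 : V) r) (hB : B =ᵐ[volume] ball (0 : V) t) :
    min (volume A) (volume B) ≤ volume (A ∩ B) := by
  rw [measure_congr (hA.inter hB), measure_congr hA, measure_congr hB]
  rcases le_total r t with h | h
  · rw [Set.inter_eq_left.2 (ball_subset_ball h)]; exact min_le_left _ _
  · rw [Set.inter_eq_right.2 (ball_subset_ball h)]; exact min_le_right _ _

lemma HasBallLevels.aemeasurable [Nontrivial V] {g : V → ℝ} (hg : HasBallLevels g)
    (h0 : ∀ x, 0 ≤ g x) : AEMeasurable g := by
  have lev : ∀ a, NullMeasurableSet (g ⁻¹' Set.Ici a) := fun a => by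
    rcases le_or_gt a 0 with ha | ha
    · have : g ⁻¹' Set.Ici a = Set.univ := Set.eq_univ_of_forall fun x => ha.trans (h0 x)
      rw [this]; exact .univ
    · obtain ⟨r, h1, h2⟩ := hg a ha
      exact measurableSet_ball.nullMeasurableSet.congr (ae_eq_ball_of_subset h1 h2).symm
  have : NullMeasurable g := measurable_of_Ici (δ := NullMeasurableSpace V volume) lev
  exact this.aemeasurable

lemma lintegral_min_le_lintegral_min [Nontrivial V] {f ρ h g : V → ℝ} (hf : AEMeasurable f)
    (hρ : AEMeasurable ρ) (hf0 : ∀ x, 0 ≤ f x) (hρ0 : ∀ x, 0 ≤ ρ x) (hh : HasBallLevels h)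
    (hg : HasBallLevels g) (hh0 : ∀ x, 0 ≤ h x) (hg0 : ∀ x, 0 ≤ g x)
    (hhf : ∀ a, 0 < a → volume {x | a ≤ h x} = volume {x | a ≤ f x})
    (hgρ : ∀ a, 0 < a → volume {x | a ≤ g x} = volume {x | a ≤ ρ x}) :
    ∫⁻ x, ENNReal.ofReal (min (f x) (ρ x)) ≤ ∫⁻ x, ENNReal.ofReal (min (h x) (g x)) := by
  rw [lintegral_eq_lintegral_meas_le _ (ae_of_all _ fun x => le_min (hf0 x) (hρ0 x)) (hf.min hρ),
    lintegral_eq_lintegral_meas_le _ (ae_of_all _ fun x => le_min (hh0 x) (hg0 x))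
      ((hh.aemeasurable hh0).min (hg.aemeasurable hg0))]
  refine setLIntegral_mono' measurableSet_Ioi fun a ha => ?_
  have e1 : {x | a ≤ min (f x) (ρ x)} = {x | a ≤ f x} ∩ {x | a ≤ ρ x} := by
    ext x; simp
  have e2 : {x | a ≤ min (h x) (g x)} = {x | a ≤ h x} ∩ {x | a ≤ g x} := by
    ext x; simp
  obtain ⟨r, h1, h2⟩ := hh a ha
  obtain ⟨t, h3, h4⟩ := hg a ha
  rw [e1, e2]
  refine le_trans ?_ (min_measure_le_measure_inter (ae_eq_ball_of_subset h1 h2)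
    (ae_eq_ball_of_subset h3 h4))
  rw [hhf a ha, hgρ a ha]
  exact le_min (measure_mono Set.inter_subset_left) (measure_mono Set.inter_subset_right)

lemma lintegral_eq_of_levels {α β : Type*} [MeasurableSpace α] [MeasurableSpace β] {μ : Measure α}
    {ν : Measure β} {f : α → ℝ} {g : β → ℝ} (hf : AEMeasurable f μ) (hg : AEMeasurable g ν)
    (hf0 : ∀ x, 0 ≤ f x) (hg0 : ∀ x, 0 ≤ g x)
    (h : ∀ a, 0 < a → μ {x | a ≤ f x} = ν {x | a ≤ g x}) :
    ∫⁻ x, ENNReal.ofReal (f x) ∂μ = ∫⁻ x, ENNReal.ofReal (g x) ∂ν := by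
  rw [lintegral_eq_lintegral_meas_le _ (ae_of_all _ hf0) hf,
    lintegral_eq_lintegral_meas_le _ (ae_of_all _ hg0) hg]
  exact setLIntegral_congr_fun measurableSet_Ioi fun a ha => h a ha

lemma integrable_of_lintegral_eq {α β : Type*} [MeasurableSpace α] [MeasurableSpace β]
    {μ : Measure α} {ν : Measure β} {f : α → ℝ} {g : β → ℝ} (hf : Integrable f μ)
    (hg : AEMeasurable g ν) (hf0 : ∀ x, 0 ≤ f x) (hg0 : ∀ x, 0 ≤ g x)
    (h : ∫⁻ x, ENNReal.ofReal (g x) ∂ν = ∫⁻ x, ENNReal.ofReal (f x) ∂μ) :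
    Integrable g ν ∧ ∫ x, g x ∂ν = ∫ x, f x ∂μ := by
  constructor
  · refine ⟨hg.aestronglyMeasurable, ?_⟩
    rw [hasFiniteIntegral_iff_ofReal (ae_of_all _ hg0), h]
    exact (hasFiniteIntegral_iff_ofReal (ae_of_all _ hf0)).1 hf.2
  · rw [integral_eq_lintegral_of_nonneg_ae (ae_of_all _ hg0) hg.aestronglyMeasurable,
      integral_eq_lintegral_of_nonneg_ae (ae_of_all _ hf0) hf.1, h]

lemma measure_level_eq_of_integral_eq {f h : V → ℝ} (hf : Continuous f) (hh : Continuous h)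
    (hfc : HasCompactSupport f) (hhc : HasCompactSupport h)
    (H : ∀ ψ : ℝ → ℝ, Continuous ψ → ψ 0 = 0 → ∫ x, ψ (h x) = ∫ x, ψ (f x)) {a : ℝ} (ha : 0 < a) :
    volume {x | a ≤ h x} = volume {x | a ≤ f x} := by
  obtain ⟨R, hR⟩ := (hfc.isCompact.union hhc.isCompact).isBounded.subset_closedBall (0 : V)
  have h0f : ∀ x ∉ closedBall (0 : V) R, f x = 0 := fun x hx =>
    image_eq_zero_of_notMem_tsupport fun h' => hx (hR (.inl h'))
  have h0h : ∀ x ∉ closedBall (0 : V) R, h x = 0 := fun x hx =>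
    image_eq_zero_of_notMem_tsupport fun h' => hx (hR (.inr h'))
  set μ : Measure V := volume.restrict (closedBall (0 : V) R)
  have : IsFiniteMeasure μ := ⟨by simpa [μ] using measure_closedBall_lt_top⟩
  have key : ∀ {k : V → ℝ}, Continuous k → (∀ x ∉ closedBall (0 : V) R, k x = 0) →
      ∀ ψ : BoundedContinuousFunction ℝ ℝ, ∫ y, ψ y ∂(μ.map k) =
        (∫ x, (ψ (k x) - ψ 0)) + ∫ _, ψ 0 ∂μ := by
    intro k hk h0 ψ
    rw [integral_map hk.aemeasurable ψ.continuous.aestronglyMeasurable]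
    have e1 : ∫ x, (ψ (k x) - ψ 0) = ∫ x, (ψ (k x) - ψ 0) ∂μ := by
      refine (setIntegral_eq_integral_of_forall_compl_eq_zero fun x hx => ?_).symm
      rw [h0 x hx, sub_self]
    rw [e1, integral_sub _ (integrable_const _)]
    · ring
    · exact Integrable.of_bound (ψ.continuous.comp hk).aestronglyMeasurable ‖ψ‖
        (ae_of_all _ fun x => ψ.norm_coe_le_norm _)
  have hmap : μ.map h = μ.map f := by
    have := Measure.isFiniteMeasure_map μ h
    have := Measure.isFiniteMeasure_map μ f
    refine ext_of_forall_integral_eq_of_IsFiniteMeasure fun ψ => ?_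
    rw [key hh h0h, key hf h0f, H (fun t => ψ t - ψ 0) (by fun_prop) (sub_self _)]
  have lev : ∀ {k : V → ℝ}, Continuous k → (∀ x ∉ closedBall (0 : V) R, k x = 0) →
      μ.map k (Set.Ici a) = volume {x | a ≤ k x} := by
    intro k hk h0
    rw [Measure.map_apply hk.measurable measurableSet_Ici,
      Measure.restrict_apply (hk.measurable measurableSet_Ici), Set.inter_eq_left.2]
    · rfl
    · intro x hx
      by_contra hx'
      have : a ≤ k x := hx
      rw [h0 x hx'] at this
      linarith
  rw [← lev hh h0h, ← lev hf h0f, hmap]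

lemma interaction_sub_le {φ : ℝ → ℝ} (hφ : Antitone φ) {N : ℝ} (hN : ∀ r, |φ r| ≤ N)
    {f g : V → ℝ} (hf : Integrable f) (hg : Integrable g) :
    interaction φ f - interaction φ g ≤
      N * (∫ x, |f x - g x|) * ((∫ x, |f x|) + ∫ x, |g x|) := by
  have hfg : Integrable fun x => f x - g x := hf.sub hg
  have bound : ∀ {u v : V → ℝ}, Integrable u → Integrable v →
      ∫ p : V × V, φ (dist p.1 p.2) * (u p.1 * v p.2) ≤ N * ((∫ x, |u x|) * ∫ x, |v x|) := by
    intro u v hu hv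
    have e : N * ((∫ x, |u x|) * ∫ x, |v x|) = ∫ p : V × V, N * (|u p.1| * |v p.2|) := by
      rw [integral_const_mul, Measure.volume_eq_prod, integral_prod_mul (fun x => |u x|) fun x => |v x|]
    rw [e]
    refine integral_mono (integrable_interaction hφ hN hu hv)
      ((hu.abs.mul_prod hv.abs).const_mul N) fun p => ?_
    refine (le_abs_self _).trans ?_
    simp only [abs_mul]
    exact mul_le_mul_of_nonneg_right (hN _) (by positivity)
  have h1 := bound hfg hf
  have h2 := bound hg hfg
  have e : interaction φ f - interaction φ g =
      (∫ p : V × V, φ (dist p.1 p.2) * ((f p.1 - g p.1) * f p.2)) +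
      ∫ p : V × V, φ (dist p.1 p.2) * (g p.1 * (f p.2 - g p.2)) := by
    rw [interaction, interaction, ← integral_sub, ← integral_add]
    · congr 1; funext p; ring
    · exact integrable_interaction hφ hN hfg hf
    · exact integrable_interaction hφ hN hg hfg
    · exact integrable_interaction hφ hN hf hf
    · exact integrable_interaction hφ hN hg hg
  rw [e]
  linarith

/-- The Riesz rearrangement inequality for a bounded antitone kernel. -/
theorem interaction_le_of_symmDecRearr [Nontrivial V] {φ : ℝ → ℝ} (hφ : Antitone φ) {N : ℝ}
    (hN : ∀ r, |φ r| ≤ N) {ρ g : V → ℝ} (hρ : Integrable ρ) (hρ0 : ∀ x, 0 ≤ ρ x)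
    (hg0 : ∀ x, 0 ≤ g x) (hg : HasBallLevels g)
    (hgρ : ∀ a, 0 < a → volume {x | a ≤ g x} = volume {x | a ≤ ρ x}) :
    interaction φ ρ ≤ interaction φ g := by
  have hgm := hg.aemeasurable hg0
  obtain ⟨hgi, hgint⟩ := integrable_of_lintegral_eq hρ hgm hρ0 hg0
    (lintegral_eq_of_levels hgm hρ.aemeasurable hg0 hρ0 hgρ)
  set m := ∫ x, ρ x with hm
  have hN0 : 0 ≤ N := (abs_nonneg _).trans (hN 0)
  have main : ∀ ε > 0, interaction φ ρ ≤ interaction φ g + 2 * (N * ε * (m + (m + ε))) := by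
    intro ε hε
    obtain ⟨f', hf'c, hf'ε, hf'cont, hf'i⟩ := hρ.exists_hasCompactSupport_integral_sub_le hε
    set f : V → ℝ := fun x => max (f' x) 0 with hfdef
    have hfcont : Continuous f := hf'cont.max continuous_const
    have hfc : HasCompactSupport f := hf'c.comp_left (g := fun t => max t 0) (by simp)
    have hf0 : ∀ x, 0 ≤ f x := fun x => le_max_right _ _
    have hfi : Integrable f := hfcont.integrable_of_hasCompactSupport hfc
    have hfε : ∫ x, |ρ x - f x| ≤ ε := by
      refine (integral_mono (hρ.sub hfi).abs (hρ.sub hf'i).norm fun x => ?_).trans hf'ε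
      simp only [hfdef, Pi.sub_apply, Real.norm_eq_abs]
      have := hρ0 x
      rcases max_cases (f' x) 0 with h | h <;> rw [h.1]
      rw [sub_zero, abs_of_nonneg this]
      exact le_trans (by linarith) (le_abs_self _)
    obtain ⟨h, hhcont, hhc, hh0, hrad, hψ, hE⟩ :=
      exists_radial_rearrangement hφ hN hfcont hfc hf0
    have hhi : Integrable h := hhcont.integrable_of_hasCompactSupport hhc
    have hhint : ∫ x, h x = ∫ x, f x := hψ id continuous_id rfl
    have hhb := hasBallLevels_of_radial hhc hrad
    have abs_eq : ∀ {u v : V → ℝ}, Integrable u → Integrable v →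
        ∫ x, |u x - v x| = (∫ x, u x) + (∫ x, v x) - 2 * ∫ x, min (u x) (v x) := by
      intro u v hu hv
      have hmin : Integrable fun x => min (u x) (v x) := hu.inf hv
      have hadd : Integrable fun x => u x + v x := hu.add hv
      rw [← integral_add hu hv, ← integral_const_mul, ← integral_sub hadd (hmin.const_mul 2)]
      congr 1; funext x
      have := max_sub_min_eq_abs' (u x) (v x)
      have := max_add_min (u x) (v x)
      linarith
    have hminle : ∫ x, min (f x) (ρ x) ≤ ∫ x, min (h x) (g x) := by
      have i1 : Integrable fun x => min (f x) (ρ x) := hfi.inf hρ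
      have i2 : Integrable fun x => min (h x) (g x) := hhi.inf hgi
      rw [integral_eq_lintegral_of_nonneg_ae (ae_of_all _ fun x => le_min (hf0 x) (hρ0 x)) i1.1,
        integral_eq_lintegral_of_nonneg_ae (ae_of_all _ fun x => le_min (hh0 x) (hg0 x)) i2.1]
      refine ENNReal.toReal_mono ?_ (lintegral_min_le_lintegral_min hfi.aemeasurable
        hρ.aemeasurable hf0 hρ0 hhb hg hh0 hg0
        (fun a ha => measure_level_eq_of_integral_eq hfcont hhcont hfc hhc hψ ha) hgρ)
      exact ((hasFiniteIntegral_iff_ofReal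
        (ae_of_all _ fun x => le_min (hh0 x) (hg0 x))).1 i2.2).ne
    have hhg : ∫ x, |h x - g x| ≤ ε := by
      have e1 := abs_eq hhi hgi
      have e2 := abs_eq hfi hρ
      simp only [abs_sub_comm (f _) (ρ _)] at e2
      linarith
    have hfm : ∫ x, f x ≤ m + ε := by
      have : (∫ x, f x) - m ≤ ∫ x, |ρ x - f x| := by
        rw [hm, ← integral_sub hfi hρ]
        refine integral_mono (hfi.sub hρ) (hρ.sub hfi).abs fun x => ?_
        rw [abs_sub_comm]; exact le_abs_self _
      linarith
    have d1 := interaction_sub_le hφ hN hρ hfi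
    have d2 := interaction_sub_le hφ hN hhi hgi
    simp only [abs_of_nonneg (hρ0 _), abs_of_nonneg (hf0 _), abs_of_nonneg (hh0 _),
      abs_of_nonneg (hg0 _)] at d1 d2
    have hfnn : 0 ≤ ∫ x, f x := integral_nonneg hf0
    have hmnn : 0 ≤ m := integral_nonneg hρ0
    have b1 : N * (∫ x, |ρ x - f x|) * ((∫ x, ρ x) + ∫ x, f x) ≤ N * ε * (m + (m + ε)) := by
      gcongr
    have b2 : N * (∫ x, |h x - g x|) * ((∫ x, h x) + ∫ x, g x) ≤ N * ε * (m + (m + ε)) := by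
      rw [hhint, hgint, add_comm]
      gcongr
    linarith
  have lim : Tendsto (fun ε : ℝ => interaction φ g + 2 * (N * ε * (m + (m + ε))))
      (nhdsWithin 0 (Set.Ioi 0)) (nhds (interaction φ g)) := by
    refine Tendsto.mono_left ?_ nhdsWithin_le_nhds
    have : Continuous fun ε : ℝ => interaction φ g + 2 * (N * ε * (m + (m + ε))) := by fun_prop
    simpa using this.tendsto 0
  exact ge_of_tendsto lim (eventually_mem_nhdsWithin.mono fun ε hε => main ε hε)

end Riesz

section LogKernel

open Real (posLog)

lemma integrable_posLog_inv_norm : Integrable fun z : E2 => posLog ‖z‖⁻¹ := by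
  have h := (integrable_fun_norm_addHaar (volume : Measure E2) (f := fun y : ℝ => posLog y⁻¹)).2
  refine h ?_
  have hd : Module.finrank ℝ E2 = 2 := by simp
  rw [hd]
  have hi : IntegrableOn (fun _ : ℝ => (1 : ℝ)) (Set.Ioc 0 1) := by simp
  refine ((hi.integrable_indicator measurableSet_Ioc).integrableOn (s := Set.Ioi 0)).mono' ?_ ?_
  · exact (((measurable_id.pow_const _).mul
      (Real.continuous_posLog.measurable.comp measurable_inv))).aestronglyMeasurable
  · refine (ae_restrict_iff' measurableSet_Ioi).2 (ae_of_all _ fun y hy => ?_)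
    have hy : 0 < y := hy
    by_cases h1 : y ≤ 1
    · rw [Set.indicator_of_mem (Set.mem_Ioc.2 ⟨hy, h1⟩)]
      have : posLog y⁻¹ ≤ y⁻¹ := by
        rw [Real.posLog]
        exact max_le (by positivity) ((Real.log_le_sub_one_of_pos (by positivity)).trans (by linarith))
      rw [Real.norm_of_nonneg (by simpa using mul_nonneg hy.le Real.posLog_nonneg)]
      calc y ^ (2 - 1) • posLog y⁻¹ ≤ y * y⁻¹ := by
            simpa using mul_le_mul_of_nonneg_left this hy.le
        _ = 1 := mul_inv_cancel₀ hy.ne'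
    · have : posLog y⁻¹ = 0 := by
        rw [Real.posLog_eq_zero_iff, abs_of_pos (by positivity)]
        exact inv_le_one_of_one_le₀ (not_le.1 h1).le
      simp [this, h1]

/-- The mass of the singular part of the logarithmic kernel. -/
def singularMass : ℝ := ∫ z : E2, posLog ‖z‖⁻¹

lemma singularMass_nonneg : 0 ≤ singularMass := integral_nonneg fun _ => Real.posLog_nonneg

lemma integrable_posLog_inv_dist_mul {u : E2 → ℝ} (hu : Integrable u) :
    Integrable (fun p : E2 × E2 => posLog (dist p.1 p.2)⁻¹ * u p.2) ∧
      ∫ p : E2 × E2, posLog (dist p.1 p.2)⁻¹ * u p.2 = singularMass * ∫ x, u x := by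
  have h := Integrable.convolution_integrand (ContinuousLinearMap.mul ℝ ℝ) hu
    integrable_posLog_inv_norm
  have hi : Integrable (fun p : E2 × E2 => posLog (dist p.1 p.2)⁻¹ * u p.2) := by
    refine h.congr (ae_of_all _ fun p => ?_)
    simp only [ContinuousLinearMap.mul_apply', dist_eq_norm]
    ring
  refine ⟨hi, ?_⟩
  have hi' : Integrable (fun p : E2 × E2 => posLog (dist p.1 p.2)⁻¹ * u p.2)
    ((volume : Measure E2).prod volume) := hi
  rw [Measure.volume_eq_prod, integral_prod_symm _ hi', singularMass]
  simp_rw [integral_mul_const, dist_eq_norm]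
  simp_rw [integral_sub_right_eq_self (μ := (volume : Measure E2)) (fun z : E2 => posLog ‖z‖⁻¹)]
  rw [integral_const_mul]

lemma integrable_posLog_inv_dist_mul_fst {u : E2 → ℝ} (hu : Integrable u) :
    Integrable (fun p : E2 × E2 => posLog (dist p.1 p.2)⁻¹ * u p.1) ∧
      ∫ p : E2 × E2, posLog (dist p.1 p.2)⁻¹ * u p.1 = singularMass * ∫ x, u x := by
  obtain ⟨h1, h2⟩ := integrable_posLog_inv_dist_mul hu
  constructor
  · refine (Integrable.swap (μ := (volume : Measure E2)) (ν := (volume : Measure E2)) h1).congr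
      (ae_of_all _ fun p => ?_)
    simp [dist_comm]
  · rw [← h2, Measure.volume_eq_prod, ← integral_prod_swap]
    simp [dist_comm]

/-- Nonnegative integrable functions bounded by one with bounded support. -/
structure IsDensity (f : E2 → ℝ) : Prop where
  nonneg : ∀ x, 0 ≤ f x
  integrable : Integrable f
  le_one : ∀ᵐ x, f x ≤ 1
  bounded : ∃ R : ℝ, ∀ x, f x ≠ 0 → ‖x‖ ≤ R

lemma ae_fst_le_one {f : E2 → ℝ} (hf : ∀ᵐ x, f x ≤ 1) : ∀ᵐ p : E2 × E2, f p.1 ≤ 1 :=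
  (Measure.quasiMeasurePreserving_fst (μ := (volume : Measure E2)) (ν := (volume : Measure E2))).ae hf

lemma ae_snd_le_one {f : E2 → ℝ} (hf : ∀ᵐ x, f x ≤ 1) : ∀ᵐ p : E2 × E2, f p.2 ≤ 1 :=
  (Measure.quasiMeasurePreserving_snd (μ := (volume : Measure E2)) (ν := (volume : Measure E2))).ae hf

lemma ae_fst_ne_snd : ∀ᵐ p : E2 × E2, p.1 ≠ p.2 := by
  have hm : MeasurableSet (Set.diagonal E2) := measurableSet_diagonal
  have : (volume : Measure (E2 × E2)) (Set.diagonal E2) = 0 := by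
    rw [Measure.volume_eq_prod, Measure.measure_prod_null hm]
    refine ae_of_all _ fun x => ?_
    have : Prod.mk x ⁻¹' Set.diagonal E2 = {x} := by ext y; simp [eq_comm]
    simp [this]
  rw [ae_iff]
  simpa [Set.diagonal] using this

lemma IsDensity.integrable_kernel {f : E2 → ℝ} (hf : IsDensity f) {k : ℝ → ℝ} (hk : Measurable k)
    {A : ℝ} (hkA : ∀ r, 0 ≤ r → |k r| ≤ A + posLog r + posLog r⁻¹) :
    Integrable fun p : E2 × E2 => k (dist p.1 p.2) * (f p.1 * f p.2) := by
  obtain ⟨R, hR⟩ := hf.bounded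
  have hff : Integrable fun p : E2 × E2 => f p.1 * f p.2 := hf.integrable.mul_prod hf.integrable
  refine ((hff.const_mul (A + posLog (2 * R))).add
    (integrable_posLog_inv_dist_mul hf.integrable).1).mono' ?_ ?_
  · exact (hk.comp (by fun_prop : Measurable fun p : E2 × E2 => dist p.1 p.2)
      ).aestronglyMeasurable.mul hff.aestronglyMeasurable
  · filter_upwards [ae_fst_le_one hf.le_one] with p hp
    have h1 := hf.nonneg p.1
    have h2 := hf.nonneg p.2
    have h3 := mul_nonneg h1 h2
    have hQ : 0 ≤ posLog (dist p.1 p.2)⁻¹ := Real.posLog_nonneg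
    simp only [Pi.add_apply]
    rw [Real.norm_eq_abs, abs_mul, abs_of_nonneg h3]
    by_cases hz : f p.1 * f p.2 = 0
    · rw [hz]
      simpa using mul_nonneg hQ h2
    · have hd : dist p.1 p.2 ≤ 2 * R := by
        have := dist_le_norm_add_norm p.1 p.2
        have := hR _ (left_ne_zero_of_mul hz)
        have := hR _ (right_ne_zero_of_mul hz)
        linarith
      have h4 := Real.posLog_le_posLog dist_nonneg hd
      have h5 := hkA _ (dist_nonneg (x := p.1) (y := p.2))
      have h6 : posLog (dist p.1 p.2)⁻¹ * (f p.1 * f p.2) ≤ posLog (dist p.1 p.2)⁻¹ * f p.2 := by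
        refine mul_le_mul_of_nonneg_left ?_ hQ
        nlinarith
      calc |k (dist p.1 p.2)| * (f p.1 * f p.2)
          ≤ (A + posLog (2 * R) + posLog (dist p.1 p.2)⁻¹) * (f p.1 * f p.2) := by
            gcongr
            linarith
        _ ≤ _ := by linarith

lemma abs_log_eq_posLog (r : ℝ) : |Real.log r| = posLog r + posLog r⁻¹ := by
  rw [Real.posLog, Real.posLog, Real.log_inv]
  rcases le_total 0 (Real.log r) with h | h
  · rw [abs_of_nonneg h, max_eq_right h, max_eq_left (by linarith), add_zero]
  · rw [abs_of_nonpos h, max_eq_left h, max_eq_right (by linarith), zero_add]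

lemma IsDensity.integrable_log {f : E2 → ℝ} (hf : IsDensity f) :
    Integrable fun p : E2 × E2 => Real.log (dist p.1 p.2) * (f p.1 * f p.2) :=
  hf.integrable_kernel Real.measurable_log (A := 0) fun r _ => by rw [abs_log_eq_posLog, zero_add]

lemma IsDensity.integrable_posLog_div {f : E2 → ℝ} (hf : IsDensity f) (D : ℝ) :
    Integrable fun p : E2 × E2 => posLog (dist p.1 p.2 / D) * (f p.1 * f p.2) := by
  refine hf.integrable_kernel (k := fun r => posLog (r / D))
    (Real.continuous_posLog.measurable.comp (measurable_id.div_const D))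
    (A := posLog D⁻¹) fun r _ => ?_
  rw [abs_of_nonneg Real.posLog_nonneg, div_eq_mul_inv]
  have := Real.posLog_mul (x := r) (y := D⁻¹)
  have := Real.posLog_nonneg (x := r⁻¹)
  linarith

lemma IsDensity.integrable_posLog_div_inv {f : E2 → ℝ} (hf : IsDensity f) (D : ℝ) :
    Integrable fun p : E2 × E2 => posLog (dist p.1 p.2 / D)⁻¹ * (f p.1 * f p.2) := by
  refine hf.integrable_kernel (k := fun r => posLog (r / D)⁻¹)
    (Real.continuous_posLog.measurable.comp (measurable_id.div_const D).inv)
    (A := posLog D) fun r _ => ?_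
  rw [abs_of_nonneg Real.posLog_nonneg, inv_div, div_eq_mul_inv]
  have := Real.posLog_mul (x := D) (y := r⁻¹)
  have := Real.posLog_nonneg (x := r)
  linarith

lemma IsDensity.interaction_log_eq {f : E2 → ℝ} (hf : IsDensity f) (h1 : ∫ x, f x = 1) {D : ℝ}
    (hD : 0 < D) :
    interaction Real.log f = Real.log D + interaction (fun r => posLog (r / D)) f -
      interaction (fun r => posLog (r / D)⁻¹) f := by
  have hff : Integrable fun p : E2 × E2 => f p.1 * f p.2 := hf.integrable.mul_prod hf.integrable
  have h11 : ∫ p : E2 × E2, f p.1 * f p.2 = 1 := by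
    rw [Measure.volume_eq_prod, integral_prod_mul, h1, one_mul]
  have hc : Real.log D = ∫ p : E2 × E2, Real.log D * (f p.1 * f p.2) := by
    rw [integral_const_mul, h11, mul_one]
  rw [interaction, interaction, interaction, hc,
    ← integral_add (hff.const_mul _) (hf.integrable_posLog_div D)]
  refine Eq.trans ?_ (integral_sub
    ((hff.const_mul _).add (hf.integrable_posLog_div D)) (hf.integrable_posLog_div_inv D))
  refine integral_congr_ae ?_
  filter_upwards [ae_fst_ne_snd] with p hp
  have hd : 0 < dist p.1 p.2 := dist_pos.2 hp
  have := Real.posLog_sub_posLog_inv (x := dist p.1 p.2 / D)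
  rw [Real.log_div hd.ne' hD.ne'] at this
  linear_combination (- f p.1 * f p.2) * this

/-- Truncation of the kernel `posLog (D / r)` near the diagonal. -/
def truncKernel (D : ℝ) (n : ℕ) (r : ℝ) : ℝ := posLog (D / max r (1 / ((n : ℝ) + 1)))

lemma truncKernel_antitone {D : ℝ} (hD : 0 < D) (n : ℕ) : Antitone (truncKernel D n) := by
  intro r s h
  have : (0 : ℝ) < 1 / ((n : ℝ) + 1) := by positivity
  have h0 : 0 < max r (1 / ((n : ℝ) + 1)) := lt_max_of_lt_right this
  have h0' : 0 < max s (1 / ((n : ℝ) + 1)) := lt_max_of_lt_right this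
  refine Real.posLog_le_posLog (by positivity) ?_
  exact div_le_div_of_nonneg_left hD.le h0 (max_le_max_right _ h)

lemma abs_truncKernel_le {D : ℝ} (hD : 0 < D) (n : ℕ) (r : ℝ) :
    |truncKernel D n r| ≤ posLog (D / (1 / ((n : ℝ) + 1))) := by
  have : (0 : ℝ) < 1 / ((n : ℝ) + 1) := by positivity
  have h0 : 0 < max r (1 / ((n : ℝ) + 1)) := lt_max_of_lt_right this
  rw [truncKernel, abs_of_nonneg Real.posLog_nonneg]
  exact Real.posLog_le_posLog (by positivity) (div_le_div_of_nonneg_left hD.le this (le_max_right _ _))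

lemma IsDensity.tendsto_interaction_truncKernel {f : E2 → ℝ} (hf : IsDensity f) {D : ℝ}
    (hD : 0 < D) : Tendsto (fun n => interaction (truncKernel D n) f) atTop
      (nhds (interaction (fun r => posLog (r / D)⁻¹) f)) := by
  refine tendsto_integral_of_dominated_convergence _
    (fun n => (integrable_interaction (truncKernel_antitone hD n) (abs_truncKernel_le hD n)
      hf.integrable hf.integrable).aestronglyMeasurable) (hf.integrable_posLog_div_inv D) ?_ ?_
  · intro n
    filter_upwards [ae_fst_ne_snd] with p hp
    have hd : 0 < dist p.1 p.2 := dist_pos.2 hp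
    have h3 := mul_nonneg (hf.nonneg p.1) (hf.nonneg p.2)
    rw [truncKernel, Real.norm_of_nonneg (mul_nonneg Real.posLog_nonneg h3), inv_div]
    refine mul_le_mul_of_nonneg_right (Real.posLog_le_posLog ?_
      (div_le_div_of_nonneg_left hD.le hd (le_max_left _ _))) h3
    have := lt_max_of_lt_left (c := 1 / ((n : ℝ) + 1)) hd
    positivity
  · filter_upwards [ae_fst_ne_snd] with p hp
    have hd : 0 < dist p.1 p.2 := dist_pos.2 hp
    refine Tendsto.mul_const _ ?_
    refine tendsto_const_nhds.congr' ?_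
    have := (tendsto_one_div_add_atTop_nhds_zero_nat (𝕜 := ℝ)).eventually (gt_mem_nhds hd)
    filter_upwards [this] with n hn
    rw [truncKernel, max_eq_left hn.le, inv_div]

lemma interaction_posLog_inv_le {ρ g : E2 → ℝ} (hρ : IsDensity ρ) (hg : IsDensity g)
    (hgl : HasBallLevels g) (hgρ : ∀ a, 0 < a → volume {x | a ≤ g x} = volume {x | a ≤ ρ x})
    {D : ℝ} (hD : 0 < D) : interaction (fun r => posLog (r / D)⁻¹) ρ ≤
      interaction (fun r => posLog (r / D)⁻¹) g :=
  le_of_tendsto_of_tendsto' (hρ.tendsto_interaction_truncKernel hD)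
    (hg.tendsto_interaction_truncKernel hD) fun n =>
    interaction_le_of_symmDecRearr (truncKernel_antitone hD n) (abs_truncKernel_le hD n)
      hρ.integrable hρ.nonneg hg.nonneg hgl hgρ

/-- The energy defect controls the far-field part of the interaction. -/
lemma interaction_posLog_le_energy_sub {ρ g : E2 → ℝ} (hρ : IsDensity ρ) (hg : IsDensity g)
    (hρ1 : ∫ x, ρ x = 1) (hg1 : ∫ x, g x = 1) (hgl : HasBallLevels g)
    (hgρ : ∀ a, 0 < a → volume {x | a ≤ g x} = volume {x | a ≤ ρ x})
    {D : ℝ} (hD : 0 < D) (hgD : ∀ x y, g x ≠ 0 → g y ≠ 0 → dist x y ≤ D) :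
    interaction (fun r => posLog (r / D)) ρ ≤ 2 * π * (energy g - energy ρ) := by
  have h1 := interaction_posLog_inv_le hρ hg hgl hgρ hD
  have h2 : interaction (fun r => posLog (r / D)) g = 0 := by
    refine integral_eq_zero_of_ae (ae_of_all _ fun p => ?_)
    by_cases hz : g p.1 * g p.2 = 0
    · simp [hz]
    · have : posLog (dist p.1 p.2 / D) = 0 := by
        rw [Real.posLog_eq_zero_iff, abs_of_nonneg (by positivity), div_le_one hD]
        exact hgD _ _ (left_ne_zero_of_mul hz) (right_ne_zero_of_mul hz)
      simp [this]
  have h3 := hρ.interaction_log_eq hρ1 hD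
  have h4 := hg.interaction_log_eq hg1 hD
  have he : ∀ f, energy f = -(2 * π)⁻¹ * interaction Real.log f := fun _ => rfl
  have hπ := Real.pi_pos
  rw [he, he]
  have : 2 * π * (-(2 * π)⁻¹ * interaction Real.log g - -(2 * π)⁻¹ * interaction Real.log ρ) =
    interaction Real.log ρ - interaction Real.log g := by field_simp; ring
  rw [this]
  linarith

end LogKernel

section Levels

lemma measure_lt_eq_iSup {α : Type*} [MeasurableSpace α] (μ : Measure α) (f : α → ℝ) (a : ℝ) :
    μ {x | a < f x} = ⨆ n : ℕ, μ {x | a + 1 / ((n : ℝ) + 1) ≤ f x} := by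
  have key : {x | a < f x} = ⋃ n : ℕ, {x | a + 1 / ((n : ℝ) + 1) ≤ f x} := by
    ext x
    simp only [Set.mem_ofPred_eq, Set.mem_iUnion]
    constructor
    · intro hx
      obtain ⟨n, hn⟩ := exists_nat_one_div_lt (sub_pos.2 hx)
      exact ⟨n, by linarith⟩
    · rintro ⟨n, hn⟩
      have : (0 : ℝ) < 1 / ((n : ℝ) + 1) := by positivity
      linarith
  have hmono : Monotone fun n : ℕ => {x | a + 1 / ((n : ℝ) + 1) ≤ f x} := by
    intro m n hmn x hx
    have := Nat.one_div_le_one_div (α := ℝ) hmn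
    simp only [Set.mem_ofPred_eq] at hx ⊢
    linarith
  rw [key, hmono.measure_iUnion]

lemma measure_lt_eq_of_measure_le_eq {α β : Type*} [MeasurableSpace α] [MeasurableSpace β]
    {μ : Measure α} {ν : Measure β} {f : α → ℝ} {g : β → ℝ}
    (h : ∀ a, 0 < a → μ {x | a ≤ f x} = ν {x | a ≤ g x}) {a : ℝ} (ha : 0 ≤ a) :
    μ {x | a < f x} = ν {x | a < g x} := by
  rw [measure_lt_eq_iSup, measure_lt_eq_iSup]
  exact iSup_congr fun n => h _ (by positivity)

lemma exists_gt_of_lt_measure {α : Type*} [MeasurableSpace α] {μ : Measure α} {f : α → ℝ}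
    {a : ℝ} {s : ℝ≥0∞} (h : s < μ {x | a < f x}) : ∃ b, a < b ∧ s < μ {x | b < f x} := by
  rw [measure_lt_eq_iSup, lt_iSup_iff] at h
  obtain ⟨n, hn⟩ := h
  have h0 : (0 : ℝ) < 1 / ((n : ℝ) + 1) := by positivity
  refine ⟨a + 1 / ((n : ℝ) + 1) / 2, by linarith, hn.trans_le (measure_mono fun x hx => ?_)⟩
  simp only [Set.mem_ofPred_eq] at hx ⊢
  linarith

end Levels

section Rearrangement

lemma volume_ball_two (x : E2) {r : ℝ} (hr : 0 ≤ r) :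
    volume (ball x r) = ENNReal.ofReal (π * r ^ 2) := by
  rw [EuclideanSpace.volume_ball_fin_two, ← ENNReal.ofReal_pow hr,
    ← ENNReal.ofReal_mul (by positivity), mul_comm]

lemma volume_closedBall_two (x : E2) {r : ℝ} (hr : 0 ≤ r) :
    volume (closedBall x r) = ENNReal.ofReal (π * r ^ 2) := by
  rw [Measure.addHaar_closedBall_eq_addHaar_ball, volume_ball_two x hr]

lemma HasBallLevels.exists_norm_le {g : E2 → ℝ} (hg : HasBallLevels g)
    (hg0 : ∀ x, 0 ≤ g x) (hfin : volume {x | 0 < g x} ≠ ∞) :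
    ∃ R : ℝ, ∀ x, g x ≠ 0 → ‖x‖ ≤ R := by
  set v := (volume {x | 0 < g x}).toReal
  have hv0 : 0 ≤ v := ENNReal.toReal_nonneg
  have hπ := Real.pi_pos
  refine ⟨Real.sqrt (v / π + 1), fun x hx => ?_⟩
  have hx0 : 0 < g x := lt_of_le_of_ne (hg0 x) hx.symm
  obtain ⟨r, h1, h2⟩ := hg (g x) hx0
  have hxr : ‖x‖ ≤ r := by simpa using h2 (show g x ≤ g x from le_rfl)
  by_contra! hlt
  have hsub : ball (0 : E2) (Real.sqrt (v / π + 1)) ⊆ {x | 0 < g x} := fun y hy =>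
    hx0.trans_le (h1 (ball_subset_ball (hlt.le.trans hxr) hy))
  have := measure_mono (μ := volume) hsub
  rw [volume_ball_two _ (Real.sqrt_nonneg _), Real.sq_sqrt (by positivity),
    ← ENNReal.ofReal_toReal hfin, ENNReal.ofReal_le_ofReal_iff hv0] at this
  have h3 : π * (v / π + 1) = v + π := by field_simp
  linarith

lemma isDensity_of_symmDecRearr {ρ g : E2 → ℝ} (hρ : IsDensity ρ) (hg0 : ∀ x, 0 ≤ g x)
    (hgl : HasBallLevels g) (hgρ : ∀ a, 0 < a → volume {x | a ≤ g x} = volume {x | a ≤ ρ x}) :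
    IsDensity g ∧ ∫ x, g x = ∫ x, ρ x := by
  have hm := hgl.aemeasurable hg0
  have hl := lintegral_eq_of_levels hm hρ.integrable.aemeasurable hg0 hρ.nonneg hgρ
  obtain ⟨h1, h2⟩ := integrable_of_lintegral_eq hρ.integrable hm hρ.nonneg hg0 hl
  refine ⟨⟨hg0, h1, ?_, hgl.exists_norm_le hg0 ?_⟩, h2⟩
  · have h3 := measure_lt_eq_of_measure_le_eq hgρ zero_le_one
    have h4 : volume {x | 1 < ρ x} = 0 := by simpa [ae_iff] using hρ.le_one
    rw [h4] at h3
    simpa [ae_iff] using h3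
  · rw [measure_lt_eq_of_measure_le_eq hgρ le_rfl]
    obtain ⟨R, hR⟩ := hρ.bounded
    refine ((measure_mono fun x hx => ?_).trans_lt
      (measure_closedBall_lt_top (x := (0 : E2)) (r := R))).ne
    simpa using hR x (ne_of_gt hx)

lemma volume_pos_le_of_dist_le {g : E2 → ℝ} (hg : IsDensity g) (hg1 : ∫ x, g x = 1) {D : ℝ}
    (hD : 0 ≤ D) (hgD : ∀ x y, g x ≠ 0 → g y ≠ 0 → dist x y ≤ D) :
    0 < D ∧ volume {x | 0 < g x} ≤ ENNReal.ofReal (π * D ^ 2) := by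
  have hne : ∃ z, g z ≠ 0 := by
    by_contra! h
    simp [h] at hg1
  obtain ⟨z, hz⟩ := hne
  have hle : volume {x | 0 < g x} ≤ ENNReal.ofReal (π * D ^ 2) := by
    rw [← volume_closedBall_two z hD]
    exact measure_mono fun x hx => hgD _ _ (ne_of_gt hx) hz
  refine ⟨lt_of_le_of_ne hD fun h => ?_, hle⟩
  rw [← h] at hle
  have h0 : volume {x | 0 < g x} = 0 := by simpa using hle
  have : ∀ᵐ x, g x ≤ 0 := by simpa [ae_iff] using h0
  have h1 : ∫ x, g x = 0 := integral_eq_zero_of_ae (by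
    filter_upwards [this] with x hx using le_antisymm hx (hg.nonneg x))
  linarith

end Rearrangement

section Concentration

open Real (posLog)

lemma one_le_posLog {t : ℝ} (ht : 3 ≤ t) : 1 ≤ posLog t := by
  rw [Real.posLog_eq_log (by rw [abs_of_nonneg] <;> linarith),
    Real.le_log_iff_exp_le (by linarith)]
  exact (Real.exp_one_lt_three.le).trans ht

/-- Some ball of radius `3 * D` carries all but a fraction of the mass controlled by the far-field
interaction. -/
lemma exists_integral_compl_ball_le {ρ : E2 → ℝ} (hρ : IsDensity ρ) (hρ1 : ∫ x, ρ x = 1) {D : ℝ}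
    (hD : 0 < D) : ∃ x₀ : E2, ∫ x in (ball x₀ (3 * D))ᶜ, ρ x ≤
      interaction (fun r => posLog (r / D)) ρ := by
  set I := interaction (fun r => posLog (r / D)) ρ with hI
  set F : E2 → ℝ := fun x => ∫ y, posLog (dist x y / D) * ρ y with hF
  have hint := hρ.integrable_posLog_div D
  rw [Measure.volume_eq_prod] at hint
  have hFρ : ∀ x, ∫ y, posLog (dist x y / D) * (ρ x * ρ y) = ρ x * F x := by
    intro x
    rw [hF, ← integral_const_mul]
    congr 1 with y
    ring
  have hFi : Integrable fun x => ρ x * F x := by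
    simpa only [hFρ] using hint.integral_prod_left
  have hFI : ∫ x, ρ x * F x = I := by
    rw [hI, interaction, Measure.volume_eq_prod, integral_prod _ hint]
    simp only [hFρ]
  have hx : ∃ x₀, F x₀ ≤ I := by
    by_contra! h
    have h1 : ∫ x, (ρ x * F x - ρ x * I) = 0 := by
      rw [integral_sub hFi (hρ.integrable.mul_const I), hFI, integral_mul_const, hρ1]
      ring
    have hnn : 0 ≤ fun x => ρ x * F x - ρ x * I := fun x => by
      simpa [mul_sub] using mul_nonneg (hρ.nonneg x) (sub_pos.2 (h x)).le
    have h1 := (integral_eq_zero_iff_of_nonneg hnn (hFi.sub (hρ.integrable.mul_const I))).1 h1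
    have h2 : ∫ x, ρ x = 0 := integral_eq_zero_of_ae (by
      filter_upwards [h1] with x hx
      have : ρ x * (F x - I) = 0 := by simpa [mul_sub] using hx
      exact (mul_eq_zero.1 this).resolve_right (sub_pos.2 (h x)).ne')
    linarith
  obtain ⟨x₀, hx₀⟩ := hx
  refine ⟨x₀, le_trans ?_ hx₀⟩
  obtain ⟨R, hR⟩ := hρ.bounded
  have hPi : Integrable fun y => posLog (dist x₀ y / D) * ρ y := by
    refine (hρ.integrable.const_mul (posLog ((‖x₀‖ + R) / D))).mono' ?_ (ae_of_all _ fun y => ?_)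
    · exact (Real.continuous_posLog.measurable.comp
        (by fun_prop : Measurable fun y => dist x₀ y / D)).aestronglyMeasurable.mul
        hρ.integrable.aestronglyMeasurable
    · rw [Real.norm_of_nonneg (mul_nonneg Real.posLog_nonneg (hρ.nonneg y))]
      by_cases hy : ρ y = 0
      · simp [hy]
      · refine mul_le_mul_of_nonneg_right (Real.posLog_le_posLog (by positivity) ?_) (hρ.nonneg y)
        gcongr
        exact (dist_le_norm_add_norm _ _).trans (by linarith [hR y hy])
  rw [← integral_indicator measurableSet_ball.compl]
  refine integral_mono (hρ.integrable.indicator measurableSet_ball.compl) hPi fun y => ?_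
  by_cases hy : y ∈ (ball x₀ (3 * D))ᶜ
  · rw [Set.indicator_of_mem hy]
    have : 3 ≤ dist x₀ y / D := by
      rw [le_div_iff₀ hD, dist_comm]
      simpa using hy
    exact le_mul_of_one_le_left (hρ.nonneg y) (one_le_posLog this)
  · rw [Set.indicator_of_notMem hy]
    exact mul_nonneg Real.posLog_nonneg (hρ.nonneg y)

end Concentration

section AnnularRearrangement

/-- The decreasing rearrangement of `u` as a function on the half line. -/
def decRearr (u : E2 → ℝ) (s : ℝ) : ℝ :=
  sSup {a : ℝ | 0 ≤ a ∧ s < (volume {x | a < u x}).toReal}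

/-- The function on `(ball x₀ R)ᶜ`, radial and decreasing about `x₀`, equimeasurable with `u`. -/
def annularRearr (u : E2 → ℝ) (x₀ : E2) (R : ℝ) (x : E2) : ℝ :=
  if dist x x₀ < R then 0 else decRearr u (π * (dist x x₀ ^ 2 - R ^ 2))

lemma decRearr_nonneg (u : E2 → ℝ) (s : ℝ) : 0 ≤ decRearr u s :=
  Real.sSup_nonneg fun _ ha => ha.1

lemma annularRearr_nonneg (u : E2 → ℝ) (x₀ : E2) (R : ℝ) (x : E2) : 0 ≤ annularRearr u x₀ R x := by
  rw [annularRearr]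
  split_ifs
  exacts [le_rfl, decRearr_nonneg _ _]

lemma lt_decRearr_iff {u : E2 → ℝ} (hu1 : ∀ᵐ x, u x ≤ 1) (hfin : volume {x | 0 < u x} ≠ ∞)
    {a s : ℝ} (ha : 0 ≤ a) (hs : 0 ≤ s) :
    a < decRearr u s ↔ s < (volume {x | a < u x}).toReal := by
  have hfin' : ∀ {b : ℝ}, 0 ≤ b → volume {x | b < u x} ≠ ∞ := fun hb =>
    ((measure_mono fun x hx => hb.trans_lt hx).trans_lt hfin.lt_top).ne
  constructor
  · intro h
    have hne : {a : ℝ | 0 ≤ a ∧ s < (volume {x | a < u x}).toReal}.Nonempty := by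
      by_contra hne
      rw [Set.not_nonempty_iff_eq_empty] at hne
      rw [decRearr, hne, Real.sSup_empty] at h
      linarith
    obtain ⟨b, hb, hab⟩ := exists_lt_of_lt_csSup hne h
    exact hb.2.trans_le (ENNReal.toReal_mono (hfin' ha) (measure_mono fun x hx => hab.trans hx))
  · intro h
    rw [← ENNReal.ofReal_lt_iff_lt_toReal hs (hfin' ha)] at h
    obtain ⟨b, hab, hb⟩ := exists_gt_of_lt_measure h
    rw [ENNReal.ofReal_lt_iff_lt_toReal hs (hfin' (ha.trans hab.le))] at hb
    refine hab.trans_le (le_csSup ⟨1, fun c hc => ?_⟩ ⟨ha.trans hab.le, hb⟩)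
    by_contra! h1
    have h0 : volume {x | c < u x} = 0 := by
      have h2 : volume {x | 1 < u x} = 0 := by simpa [ae_iff] using hu1
      exact measure_mono_null (fun x hx => h1.trans hx) h2
    have := hc.2
    rw [h0, ENNReal.toReal_zero] at this
    linarith

variable {u : E2 → ℝ} {x₀ : E2} {R : ℝ}

lemma setOf_lt_annularRearr (hu1 : ∀ᵐ x, u x ≤ 1) (hfin : volume {x | 0 < u x} ≠ ∞) (hR : 0 ≤ R)
    {a : ℝ} (ha : 0 ≤ a) :
    {x | a < annularRearr u x₀ R x} =
      ball x₀ (Real.sqrt (R ^ 2 + (volume {x | a < u x}).toReal / π)) \ ball x₀ R := by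
  have hπ := Real.pi_pos
  have hv : 0 ≤ (volume {x | a < u x}).toReal := ENNReal.toReal_nonneg
  ext x
  simp only [Set.mem_ofPred_eq, Set.mem_sdiff, mem_ball, annularRearr, not_lt]
  split_ifs with h
  · exact ⟨fun h' => absurd h' ha.not_gt, fun h' => absurd h h'.2.not_gt⟩
  · have h' : R ≤ dist x x₀ := not_lt.1 h
    have hs : 0 ≤ π * (dist x x₀ ^ 2 - R ^ 2) :=
      mul_nonneg hπ.le (sub_nonneg.2 (pow_le_pow_left₀ hR h' 2))
    rw [lt_decRearr_iff hu1 hfin ha hs, Real.lt_sqrt dist_nonneg, ← sub_lt_iff_lt_add',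
      lt_div_iff₀' hπ]
    exact ⟨fun h1 => ⟨h1, h'⟩, fun h1 => h1.1⟩

lemma volume_lt_annularRearr (hu1 : ∀ᵐ x, u x ≤ 1) (hfin : volume {x | 0 < u x} ≠ ∞) (hR : 0 ≤ R)
    {a : ℝ} (ha : 0 ≤ a) : volume {x | a < annularRearr u x₀ R x} = volume {x | a < u x} := by
  have hπ := Real.pi_pos
  have hfa : volume {x | a < u x} ≠ ∞ :=
    ((measure_mono fun x hx => ha.trans_lt hx).trans_lt hfin.lt_top).ne
  have hv : 0 ≤ (volume {x | a < u x}).toReal := ENNReal.toReal_nonneg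
  have hsub : ball x₀ R ⊆ ball x₀ (Real.sqrt (R ^ 2 + (volume {x | a < u x}).toReal / π)) := by
    refine ball_subset_ball (Real.le_sqrt_of_sq_le ?_)
    have : 0 ≤ (volume {x | a < u x}).toReal / π := by positivity
    linarith
  rw [setOf_lt_annularRearr hu1 hfin hR ha, measure_sdiff hsub
    measurableSet_ball.nullMeasurableSet measure_ball_lt_top.ne, volume_ball_two _ hR,
    volume_ball_two _ (Real.sqrt_nonneg _), Real.sq_sqrt (by positivity),
    ← ENNReal.ofReal_sub _ (by positivity), ← ENNReal.ofReal_toReal hfa]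
  congr 1
  rw [ENNReal.ofReal_toReal hfa]
  field_simp
  ring

lemma measurable_annularRearr (hu1 : ∀ᵐ x, u x ≤ 1) (hfin : volume {x | 0 < u x} ≠ ∞)
    (hR : 0 ≤ R) : Measurable (annularRearr u x₀ R) := by
  refine measurable_of_Ioi fun a => ?_
  change MeasurableSet {x | a < annularRearr u x₀ R x}
  rcases le_or_gt 0 a with ha | ha
  · rw [setOf_lt_annularRearr hu1 hfin hR ha]
    exact measurableSet_ball.diff measurableSet_ball
  · convert MeasurableSet.univ
    exact Set.eq_univ_of_forall fun x => ha.trans_le (annularRearr_nonneg u x₀ R x)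

lemma annularRearr_of_mem_ball {x : E2} (hx : x ∈ ball x₀ R) : annularRearr u x₀ R x = 0 :=
  if_pos hx

lemma dist_le_of_annularRearr_ne_zero {D : ℝ} (hD : 0 ≤ D) (hu1 : ∀ᵐ x, u x ≤ 1)
    (hfin : volume {x | 0 < u x} ≤ ENNReal.ofReal (π * D ^ 2)) {x : E2}
    (hx : annularRearr u x₀ (3 * D) x ≠ 0) : dist x x₀ ≤ 4 * D := by
  have hπ := Real.pi_pos
  have hx' : x ∈ {x | 0 < annularRearr u x₀ (3 * D) x} :=
    lt_of_le_of_ne (annularRearr_nonneg _ _ _ _) hx.symm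
  rw [setOf_lt_annularRearr hu1 (hfin.trans_lt ENNReal.ofReal_lt_top).ne (by positivity) le_rfl]
    at hx'
  refine (mem_ball.1 hx'.1).le.trans (Real.sqrt_le_iff.2 ⟨by positivity, ?_⟩)
  have h1 := ENNReal.toReal_le_of_le_ofReal (by positivity) hfin
  have h2 : (volume {x | 0 < u x}).toReal / π ≤ D ^ 2 := by
    rw [div_le_iff₀ hπ]
    linarith
  nlinarith

end AnnularRearrangement

section Compactification

open Real (posLog)

lemma interaction_log_sub_le {ρ ρ₀ u ρt : E2 → ℝ} (hρ : IsDensity ρ) (hρt : IsDensity ρt)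
    (hρ₀ : ∀ x, 0 ≤ ρ₀ x) (hu : ∀ x, 0 ≤ u x) (hadd : ∀ x, ρ₀ x + u x = ρ x)
    (hle : ∀ x, ρ₀ x ≤ ρt x) (hρ₀i : Integrable ρ₀) (hui : Integrable u) {L : ℝ}
    (hL : ∀ x y, ρt x ≠ 0 → ρt y ≠ 0 → Real.log (dist x y) ≤ L) :
    interaction Real.log ρt - interaction Real.log ρ ≤
      L * ((∫ x, ρt x) ^ 2 - (∫ x, ρ₀ x) ^ 2) + 2 * singularMass * ∫ x, u x := by
  have htt : Integrable fun p : E2 × E2 => ρt p.1 * ρt p.2 := hρt.integrable.mul_prod hρt.integrable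
  have h00 : Integrable fun p : E2 × E2 => ρ₀ p.1 * ρ₀ p.2 := hρ₀i.mul_prod hρ₀i
  obtain ⟨hf, hf'⟩ := integrable_posLog_inv_dist_mul_fst hui
  obtain ⟨hs, hs'⟩ := integrable_posLog_inv_dist_mul hui
  have hsq : ∀ f : E2 → ℝ, ∫ p : E2 × E2, f p.1 * f p.2 = (∫ x, f x) ^ 2 := fun f => by
    rw [Measure.volume_eq_prod, integral_prod_mul, sq]
  have hrhs : L * ((∫ x, ρt x) ^ 2 - (∫ x, ρ₀ x) ^ 2) + 2 * singularMass * ∫ x, u x =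
      ∫ p : E2 × E2, (L * (ρt p.1 * ρt p.2 - ρ₀ p.1 * ρ₀ p.2) +
        (posLog (dist p.1 p.2)⁻¹ * u p.1 + posLog (dist p.1 p.2)⁻¹ * u p.2)) := by
    refine Eq.trans ?_ (integral_add ((htt.sub h00).const_mul L) (hf.add hs)).symm
    rw [integral_const_mul, integral_sub' htt h00, integral_add' hf hs, hf', hs', hsq, hsq]
    ring
  rw [hrhs, interaction, interaction, ← integral_sub hρt.integrable_log hρ.integrable_log]
  refine integral_mono_ae (hρt.integrable_log.sub hρ.integrable_log)
    (((htt.sub h00).const_mul L).add (hf.add hs)) ?_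
  filter_upwards [ae_fst_le_one hρ.le_one, ae_snd_le_one hρ.le_one] with p h1 h2
  have ha := hadd p.1
  have hb := hadd p.2
  have hN : 0 ≤ posLog (dist p.1 p.2)⁻¹ := Real.posLog_nonneg
  have hlog : -Real.log (dist p.1 p.2) ≤ posLog (dist p.1 p.2)⁻¹ := by
    rw [← Real.log_inv]
    exact le_max_right _ _
  have hx0 := hρ₀ p.1
  have hy0 := hρ₀ p.2
  have hxu := hu p.1
  have hyu := hu p.2
  have hprod : 0 ≤ ρt p.1 * ρt p.2 - ρ₀ p.1 * ρ₀ p.2 :=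
    sub_nonneg.2 (mul_le_mul (hle _) (hle _) hy0 (hρt.nonneg _))
  have hA : Real.log (dist p.1 p.2) * (ρt p.1 * ρt p.2 - ρ₀ p.1 * ρ₀ p.2) ≤
      L * (ρt p.1 * ρt p.2 - ρ₀ p.1 * ρ₀ p.2) := by
    by_cases hz : ρt p.1 * ρt p.2 = 0
    · have : ρt p.1 * ρt p.2 - ρ₀ p.1 * ρ₀ p.2 = 0 :=
        le_antisymm (by rw [hz]; linarith [mul_nonneg hx0 hy0]) hprod
      rw [this]
      simp
    · exact mul_le_mul_of_nonneg_right
        (hL _ _ (left_ne_zero_of_mul hz) (right_ne_zero_of_mul hz)) hprod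
  have hdiff : ρ p.1 * ρ p.2 - ρ₀ p.1 * ρ₀ p.2 = u p.1 * ρ p.2 + ρ₀ p.1 * u p.2 := by
    rw [← ha, ← hb]
    ring
  have hdiff0 : 0 ≤ ρ p.1 * ρ p.2 - ρ₀ p.1 * ρ₀ p.2 := by
    rw [hdiff]
    exact add_nonneg (mul_nonneg hxu (hρ.nonneg _)) (mul_nonneg hx0 hyu)
  have hdiff1 : ρ p.1 * ρ p.2 - ρ₀ p.1 * ρ₀ p.2 ≤ u p.1 + u p.2 := by
    rw [hdiff]
    exact add_le_add (mul_le_of_le_one_right hxu h2) (mul_le_of_le_one_left hyu (by linarith))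
  have hB : -Real.log (dist p.1 p.2) * (ρ p.1 * ρ p.2 - ρ₀ p.1 * ρ₀ p.2) ≤
      posLog (dist p.1 p.2)⁻¹ * (u p.1 + u p.2) :=
    mul_le_mul hlog hdiff1 hdiff0 hN
  linarith

/-- The function obtained from `ρ` by moving its part outside `ball x₀ R` to an annulus around that
ball. -/
def compactify (ρ : E2 → ℝ) (x₀ : E2) (R : ℝ) (x : E2) : ℝ :=
  (ball x₀ R).indicator ρ x + annularRearr ((ball x₀ R)ᶜ.indicator ρ) x₀ R x

variable {ρ : E2 → ℝ} {x₀ : E2} {R : ℝ}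

lemma indicator_ball_le_compactify (x : E2) : (ball x₀ R).indicator ρ x ≤ compactify ρ x₀ R x :=
  le_add_of_nonneg_right (annularRearr_nonneg _ _ _ _)

lemma compactify_nonneg (hρ : ∀ x, 0 ≤ ρ x) (x : E2) : 0 ≤ compactify ρ x₀ R x :=
  (Set.indicator_nonneg (fun y _ => hρ y) x).trans (indicator_ball_le_compactify x)

lemma compactify_of_mem_ball {x : E2} (hx : x ∈ ball x₀ R) : compactify ρ x₀ R x = ρ x := by
  rw [compactify, annularRearr_of_mem_ball hx, Set.indicator_of_mem hx, add_zero]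

lemma indicator_compl_ball_le_one (hρ1 : ∀ᵐ x, ρ x ≤ 1) :
    ∀ᵐ x, (ball x₀ R)ᶜ.indicator ρ x ≤ 1 := by
  filter_upwards [hρ1] with x hx
  exact Set.indicator_apply_le' (fun _ => hx) fun _ => zero_le_one

lemma setOf_lt_indicator_compl {a : ℝ} (ha : 0 ≤ a) :
    {x | a < (ball x₀ R)ᶜ.indicator ρ x} = {x | a < ρ x} \ ball x₀ R := by
  ext x
  by_cases hx : x ∈ ball x₀ R
  · simp only [Set.mem_ofPred_eq, Set.mem_sdiff, hx, not_true, and_false, iff_false, not_lt]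
    rwa [Set.indicator_of_notMem (by simpa using hx)]
  · simp only [Set.mem_ofPred_eq, Set.mem_sdiff, hx, not_false_iff, and_true]
    rw [Set.indicator_of_mem (by simpa using hx)]

lemma volume_lt_compactify (hρ1 : ∀ᵐ x, ρ x ≤ 1) (hfin : volume {x | 0 < ρ x} ≠ ∞) (hR : 0 ≤ R)
    {a : ℝ} (ha : 0 ≤ a) : volume {x | a < compactify ρ x₀ R x} = volume {x | a < ρ x} := by
  have hfin' : volume {x | 0 < (ball x₀ R)ᶜ.indicator ρ x} ≠ ∞ := by
    rw [setOf_lt_indicator_compl le_rfl]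
    exact ((measure_mono Set.sdiff_subset).trans_lt hfin.lt_top).ne
  have h1 : {x | a < compactify ρ x₀ R x} ∩ ball x₀ R = {x | a < ρ x} ∩ ball x₀ R := by
    ext x
    simp only [Set.mem_inter_iff, Set.mem_ofPred_eq, and_congr_left_iff]
    intro hx
    rw [compactify_of_mem_ball hx]
  have h2 : {x | a < compactify ρ x₀ R x} \ ball x₀ R =
      {x | a < annularRearr ((ball x₀ R)ᶜ.indicator ρ) x₀ R x} := by
    ext x
    simp only [Set.mem_sdiff, Set.mem_ofPred_eq]
    by_cases hx : x ∈ ball x₀ R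
    · simp [hx, annularRearr_of_mem_ball hx, ha]
    · simp [hx, compactify]
  rw [← measure_inter_add_sdiff {x | a < compactify ρ x₀ R x} (measurableSet_ball (x := x₀) (ε := R)),
    ← measure_inter_add_sdiff {x | a < ρ x} (measurableSet_ball (x := x₀) (ε := R)), h1, h2,
    volume_lt_annularRearr (indicator_compl_ball_le_one hρ1) hfin' hR ha,
    setOf_lt_indicator_compl ha]

lemma dist_le_of_compactify_ne_zero {D : ℝ} (hD : 0 ≤ D) (hρ1 : ∀ᵐ x, ρ x ≤ 1)
    (hfin : volume {x | 0 < ρ x} ≤ ENNReal.ofReal (π * D ^ 2)) {x : E2}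
    (hx : compactify ρ x₀ (3 * D) x ≠ 0) : dist x x₀ ≤ 4 * D := by
  by_cases hxb : x ∈ ball x₀ (3 * D)
  · exact (mem_ball.1 hxb).le.trans (by linarith)
  · refine dist_le_of_annularRearr_ne_zero hD (indicator_compl_ball_le_one hρ1) (x₀ := x₀)
      (u := (ball x₀ (3 * D))ᶜ.indicator ρ) ?_ ?_
    · rw [setOf_lt_indicator_compl le_rfl]
      exact (measure_mono Set.sdiff_subset).trans hfin
    · rwa [compactify, Set.indicator_of_notMem hxb, zero_add] at hx

lemma isDensity_compactify {D : ℝ} (hD : 0 ≤ D) (hρ : IsDensity ρ)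
    (hfin : volume {x | 0 < ρ x} ≤ ENNReal.ofReal (π * D ^ 2)) :
    IsDensity (compactify ρ x₀ (3 * D)) ∧ ∫ x, compactify ρ x₀ (3 * D) x = ∫ x, ρ x := by
  have hfin0 : volume {x | 0 < ρ x} ≠ ∞ := (hfin.trans_lt ENNReal.ofReal_lt_top).ne
  have hfin' : volume {x | 0 < (ball x₀ (3 * D))ᶜ.indicator ρ x} ≠ ∞ := by
    rw [setOf_lt_indicator_compl le_rfl]
    exact ((measure_mono Set.sdiff_subset).trans_lt hfin0.lt_top).ne
  have hm : AEMeasurable (compactify ρ x₀ (3 * D)) :=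
    (hρ.integrable.aemeasurable.indicator measurableSet_ball).add
      (measurable_annularRearr (indicator_compl_ball_le_one hρ.le_one) hfin'
        (by positivity)).aemeasurable
  have hv : ∀ {a : ℝ}, 0 ≤ a → volume {x | a < compactify ρ x₀ (3 * D) x} =
    volume {x | a < ρ x} := fun ha => volume_lt_compactify hρ.le_one hfin0 (by positivity) ha
  have hl : ∫⁻ x, ENNReal.ofReal (compactify ρ x₀ (3 * D) x) = ∫⁻ x, ENNReal.ofReal (ρ x) := by
    rw [lintegral_eq_lintegral_meas_lt _ (ae_of_all _ (compactify_nonneg hρ.nonneg)) hm,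
      lintegral_eq_lintegral_meas_lt _ (ae_of_all _ hρ.nonneg) hρ.integrable.aemeasurable]
    exact setLIntegral_congr_fun measurableSet_Ioi fun a ha => hv (le_of_lt ha)
  obtain ⟨h1, h2⟩ := integrable_of_lintegral_eq hρ.integrable hm hρ.nonneg
    (compactify_nonneg hρ.nonneg) hl
  refine ⟨⟨compactify_nonneg hρ.nonneg, h1, ?_, ‖x₀‖ + 4 * D, fun x hx => ?_⟩, h2⟩
  · have h4 : volume {x | 1 < ρ x} = 0 := by simpa [ae_iff] using hρ.le_one
    have h3 := hv zero_le_one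
    rw [h4] at h3
    simpa [ae_iff] using h3
  · have h5 := dist_le_of_compactify_ne_zero hD hρ.le_one hfin hx
    rw [dist_eq_norm] at h5
    linarith [norm_le_norm_add_norm_sub' x x₀]

lemma energy_sub_energy_compactify_le {D Λ : ℝ} (hD : 0 ≤ D) (hDΛ : D ≤ Λ) (hρ : IsDensity ρ)
    (hρ1 : ∫ x, ρ x = 1) (hfin : volume {x | 0 < ρ x} ≤ ENNReal.ofReal (π * D ^ 2)) :
    2 * π * (energy ρ - energy (compactify ρ x₀ (3 * D))) ≤
      (2 * posLog (8 * Λ) + 2 * singularMass) * ∫ x in (ball x₀ (3 * D))ᶜ, ρ x := by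
  obtain ⟨ht, ht1⟩ := isDensity_compactify (x₀ := x₀) hD hρ hfin
  have h0i := hρ.integrable.indicator (measurableSet_ball (x := x₀) (ε := 3 * D))
  have hui := hρ.integrable.indicator (measurableSet_ball (x := x₀) (ε := 3 * D)).compl
  have key := interaction_log_sub_le (L := posLog (8 * Λ)) hρ ht
    (fun x => Set.indicator_nonneg (fun y _ => hρ.nonneg y) x)
    (fun x => Set.indicator_nonneg (fun y _ => hρ.nonneg y) x)
    (fun x => congrFun (Set.indicator_self_add_compl (ball x₀ (3 * D)) ρ) x)
    indicator_ball_le_compactify h0i hui (fun x y hx hy => by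
      have hx' := dist_le_of_compactify_ne_zero hD hρ.le_one hfin hx
      have hy' := dist_le_of_compactify_ne_zero hD hρ.le_one hfin hy
      refine (le_max_right 0 _).trans (Real.posLog_le_posLog dist_nonneg ?_)
      have := dist_triangle_right x y x₀
      linarith)
  have hsum : (∫ x, (ball x₀ (3 * D)).indicator ρ x) +
      ∫ x, (ball x₀ (3 * D))ᶜ.indicator ρ x = 1 := by
    rw [← hρ1, ← integral_add h0i hui]
    exact integral_congr_ae (ae_of_all _ fun x =>
      congrFun (Set.indicator_self_add_compl (ball x₀ (3 * D)) ρ) x)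
  have he : ∀ f, energy f = -(2 * π)⁻¹ * interaction Real.log f := fun _ => rfl
  have hπ := Real.pi_pos
  have hL : 0 ≤ posLog (8 * Λ) := Real.posLog_nonneg
  rw [← integral_indicator measurableSet_ball.compl, he, he]
  rw [ht1, hρ1] at key
  set m := ∫ x, (ball x₀ (3 * D))ᶜ.indicator ρ x
  set M := ∫ x, (ball x₀ (3 * D)).indicator ρ x
  have hM : M = 1 - m := by linarith
  rw [hM] at key
  have h2 : 2 * π * (-(2 * π)⁻¹ * interaction Real.log ρ -
      -(2 * π)⁻¹ * interaction Real.log (compactify ρ x₀ (3 * D))) =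
      interaction Real.log (compactify ρ x₀ (3 * D)) - interaction Real.log ρ := by
    field_simp
    ring
  rw [h2]
  nlinarith [mul_nonneg hL (sq_nonneg m)]

end Compactification

/-- Compactification step (Step 2 of the proof of Theorem 1.4): a normalized density
with small energy defect admits an equimeasurable modification supported in a ball of
radius `4D`, agreeing with `ρ` on a ball of radius `3D`, with comparable energy. -/
theorem compactification_of_almost_maximizer :
    ∀ Λ : ℝ, 2 / Real.sqrt Real.pi ≤ Λ →
    ∃ c > (0:ℝ), ∃ C > (0:ℝ),
      ∀ ρ ρs : E2 → ℝ,
        (∀ x, 0 ≤ ρ x) →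
        HasCompactSupport ρ →
        Integrable ρ →
        (∫ x, ρ x) = 1 →
        eLpNorm ρ ⊤ volume = 1 →
        IsSymmDecRearr ρ ρs →
        Metric.diam (Function.support ρs) ≤ Λ →
        energy ρs - energy ρ ≤ c →
        ∃ (x₀ : E2) (ρt : E2 → ℝ),
          (∀ x, 0 ≤ ρt x) ∧
          -- ρ̃ is equimeasurable with ρ
          (∀ a : ℝ, 0 < a → volume {x | a < ρt x} = volume {x | a < ρ x}) ∧
          -- ρ̃ = ρ on B_{3D}(x₀)
          (∀ x ∈ Metric.ball x₀ (3 * Metric.diam (Function.support ρs)), ρt x = ρ x) ∧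
          -- supp ρ̃ ⊆ B_{4D}(x₀)
          Function.support ρt ⊆
            Metric.closedBall x₀ (4 * Metric.diam (Function.support ρs)) ∧
          -- almost no energy is lost
          energy ρ - C * (energy ρs - energy ρ) ≤ energy ρt := by
  intro Λ _
  refine ⟨1, one_pos, 2 * Real.posLog (8 * Λ) + 2 * singularMass + 1, ?_, ?_⟩
  · have h1 : 0 ≤ Real.posLog (8 * Λ) := Real.posLog_nonneg
    have h2 := singularMass_nonneg
    linarith
  intro ρ ρs hρ0 hρc hρi hρ1 hρn hs hΛ _
  set D := Metric.diam (Function.support ρs)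
  have hρ : IsDensity ρ := by
    refine ⟨hρ0, hρi, ?_, ?_⟩
    · have h := ae_le_eLpNormEssSup (f := ρ) (μ := volume)
      rw [← eLpNorm_exponent_top, hρn] at h
      filter_upwards [h] with x hx
      rw [← ofReal_norm, Real.norm_of_nonneg (hρ0 x)] at hx
      simpa using hx
    · obtain ⟨R, hR⟩ := hρc.isCompact.isBounded.exists_norm_le
      exact ⟨R, fun x hx => hR x (subset_tsupport ρ hx)⟩
  have hlev : ∀ a, 0 < a → volume {x | a ≤ ρs x} = volume {x | a ≤ ρ x} := fun a ha => by
    simpa only [abs_of_nonneg (hρ0 _)] using (hs.2 a ha).2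
  have hball : HasBallLevels ρs := fun a ha => (hs.2 a ha).1
  obtain ⟨hρs, hρs1⟩ := isDensity_of_symmDecRearr hρ hs.1 hball hlev
  rw [hρ1] at hρs1
  have hbdd : Bornology.IsBounded (Function.support ρs) := by
    obtain ⟨R, hR⟩ := hρs.bounded
    exact isBounded_iff_forall_norm_le.2 ⟨R, fun x hx => hR x hx⟩
  have hdist : ∀ x y, ρs x ≠ 0 → ρs y ≠ 0 → dist x y ≤ D := fun x y hx hy =>
    dist_le_diam_of_mem hbdd hx hy
  obtain ⟨hD, hvol⟩ := volume_pos_le_of_dist_le hρs hρs1 diam_nonneg hdist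
  rw [measure_lt_eq_of_measure_le_eq hlev le_rfl] at hvol
  obtain ⟨x₀, hx₀⟩ := exists_integral_compl_ball_le hρ hρ1 hD
  have hδ := hx₀.trans (interaction_posLog_le_energy_sub hρ hρs hρ1 hρs1 hball hlev hD hdist)
  have hm : 0 ≤ ∫ x in (ball x₀ (3 * D))ᶜ, ρ x := integral_nonneg hρ0
  have hE := energy_sub_energy_compactify_le (x₀ := x₀) hD.le hΛ hρ hρ1 hvol
  refine ⟨x₀, compactify ρ x₀ (3 * D), compactify_nonneg hρ0, fun a ha =>
    volume_lt_compactify hρ.le_one (hvol.trans_lt ENNReal.ofReal_lt_top).ne (by positivity) ha.le,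
    fun x hx => compactify_of_mem_ball hx,
    fun x hx => dist_le_of_compactify_ne_zero hD.le hρ.le_one hvol hx, ?_⟩
  have hπ := Real.pi_pos
  have hK : 0 ≤ 2 * Real.posLog (8 * Λ) + 2 * singularMass := by
    have h1 : 0 ≤ Real.posLog (8 * Λ) := Real.posLog_nonneg
    have h2 := singularMass_nonneg
    linarith
  have hδ0 : 0 ≤ energy ρs - energy ρ := by
    have := hm.trans hδ
    exact (mul_nonneg_iff_of_pos_left (by positivity)).1 this
  have h3 := hE.trans (mul_le_mul_of_nonneg_left hδ hK)
  have h4 : energy ρ - energy (compactify ρ x₀ (3 * D)) ≤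
      (2 * Real.posLog (8 * Λ) + 2 * singularMass) * (energy ρs - energy ρ) := by
    refine le_of_mul_le_mul_left ?_ (by positivity : 0 < 2 * π)
    linarith
  linarith

end
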